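/- Let Ω ⊂ ℝ² be diffeomorphic to an annulus and let ω be smooth on the closure of Ω, locally constant on ∂Ω, with no critical points. Let ω_ε be a smooth family with ω₀ = ω and ν = (∂/∂ε)|_{ε=0}ω_ε, with ν = 0 on ∂Ω. Then (d/dε)|_{ε=0} A_{ω_ε} = 0 if and only if ∫_{{ω=λ}} ν/|∇ω| dl = 0 for every λ in the range of ω, which in turn holds if and only if ν = {ω, α} for some smooth stream function α (constant on each boundary component). -/

import Mathlib

open MeasureTheory Set
noncomputable section

abbrev E2 : Type := EuclideanSpace ℝ (Fin 2)

def pd (i : Fin 2) (f : E2 → ℝ) (x : E2) : ℝ :=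
  fderiv ℝ f x (EuclideanSpace.single i (1:ℝ))

def pb (f g : E2 → ℝ) (x : E2) : ℝ :=
  pd 0 f x * pd 1 g x - pd 1 f x * pd 0 g x

/-- arc-length integral of u over the level set {ω = λ} -/
def Jint (Ω : Set E2) (ω u : E2 → ℝ) (lam : ℝ) : ℝ :=
  ∫ x in {x ∈ closure Ω | ω x = lam}, u x ∂(μH[1] : Measure E2)

/-- the closed annulus {1 ≤ ‖x‖ ≤ 2} -/
def stdAnnulus : Set E2 := {x : E2 | 1 ≤ ‖x‖ ∧ ‖x‖ ≤ 2}


def HasLog {X : Type} [TopologicalSpace X] (g : X → ℂ) : Prop :=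
  ∃ h : X → ℂ, Continuous h ∧ ∀ x, g x = Complex.exp (h x)

lemma HasLog.of_close {X : Type} [TopologicalSpace X] {f g : X → ℂ} (hf : Continuous f)
    (hg : Continuous g) (hf0 : ∀ x, f x ≠ 0) (hc : ∀ x, ‖g x / f x - 1‖ < 1) (h : HasLog f) :
    HasLog g := by
  obtain ⟨l, hl, hfl⟩ := h
  have hs : ∀ x, g x / f x ∈ Complex.slitPlane := fun x => by
    simpa using Complex.mem_slitPlane_of_norm_lt_one (hc x)
  refine ⟨fun x => l x + Complex.log (g x / f x), ?_, fun x => ?_⟩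
  · exact hl.add ((hg.div hf hf0).clog hs)
  · rw [Complex.exp_add, Complex.exp_log (Complex.slitPlane_ne_zero (hs x)), ← hfl]
    field_simp [hf0 x]

lemma HasLog.homotopy {X : Type} [TopologicalSpace X] [CompactSpace X] (H : ℝ → X → ℂ)
    (hH : Continuous (fun p : ℝ × X => H p.1 p.2)) (h0 : ∀ t x, H t x ≠ 0) (s t : ℝ)
    (hl : HasLog (H s)) : HasLog (H t) := by
  have hc : ∀ t, Continuous (H t) := fun t => hH.comp (by fun_prop : Continuous fun x => (t, x))
  have key : IsLocallyConstant (fun t => HasLog (H t)) := by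
    rw [IsLocallyConstant.iff_eventually_eq]
    intro t0
    have : ∀ᶠ t in nhds t0, ∀ x ∈ (univ : Set X), ‖H t x / H t0 x - 1‖ < 1 ∧
        ‖H t0 x / H t x - 1‖ < 1 := by
      apply isCompact_univ.eventually_forall_of_forall_eventually
      intro x _
      have hc1 : Continuous fun p : ℝ × X => ‖H p.1 p.2 / H t0 p.2 - 1‖ :=
        ((hH.div ((hc t0).comp continuous_snd) (fun p => h0 _ _)).sub continuous_const).norm
      have hc2 : Continuous fun p : ℝ × X => ‖H t0 p.2 / H p.1 p.2 - 1‖ :=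
        ((((hc t0).comp continuous_snd).div hH (fun p => h0 _ _)).sub continuous_const).norm
      have e1 := hc1.continuousAt.eventually_lt (x₀ := (t0, x)) continuousAt_const
        (by simp [h0] : _ < (1:ℝ))
      have e2 := hc2.continuousAt.eventually_lt (x₀ := (t0, x)) continuousAt_const
        (by simp [h0] : _ < (1:ℝ))
      filter_upwards [e1, e2] with p h1 h2 using ⟨h1, h2⟩
    filter_upwards [this] with t ht
    apply propext
    exact ⟨HasLog.of_close (hc _) (hc _) (h0 _) fun x => (ht x trivial).2,
      HasLog.of_close (hc _) (hc _) (h0 _) fun x => (ht x trivial).1⟩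
  have := key.apply_eq_of_preconnectedSpace s t
  exact this ▸ hl

lemma not_hasLog_odd (g : Circle → ℂ) (hodd : ∀ z, g (-z) = - g z) (h0 : ∀ z, g z ≠ 0) :
    ¬ HasLog g := by
  rintro ⟨h, hc, he⟩
  set r : Circle → ℝ := fun z => (h (-z) - h z).im with hr
  have hrc : Continuous r := by
    apply Complex.continuous_im.comp
    exact (hc.comp continuous_neg).sub hc
  have hro : ∀ z, r (-z) = - r z := fun z => by simp [hr]
  have hz : ∃ z, r z = 0 := by
    rcases le_total (r 1) 0 with h1 | h1
    · exact mem_range_of_exists_le_of_exists_ge hrc ⟨1, h1⟩ ⟨-1, by rw [hro]; linarith⟩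
    · exact mem_range_of_exists_le_of_exists_ge hrc ⟨-1, by rw [hro]; linarith⟩ ⟨1, h1⟩
  obtain ⟨z, hz⟩ := hz
  have e1 : Complex.exp (h (-z) - h z) = -1 := by
    rw [Complex.exp_sub, ← he, ← he, hodd, neg_div, div_self (h0 z)]
  have e2 := congrArg Complex.re e1
  rw [Complex.exp_re, show (h (-z) - h z).im = 0 from hz] at e2
  simp at e2
  have := Real.exp_pos ((h (-z)).re - (h z).re)
  linarith

/-- Invariance of domain in the plane. -/
lemma invariance_of_domain_unit (f : ℂ → ℂ) (hf : ContinuousOn f (Metric.closedBall 0 1))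
    (hinj : InjOn f (Metric.closedBall 0 1)) : f '' Metric.closedBall 0 1 ∈ nhds (f 0) := by
  by_contra hcon
  set F : ℂ → ℂ := fun z => f (z / ((max 1 ‖z‖ : ℝ) : ℂ)) with hF
  have hpos : ∀ z : ℂ, (0:ℝ) < max 1 ‖z‖ := fun z => lt_max_of_lt_left one_pos
  have hFc : Continuous F := by
    apply hf.comp_continuous
    · apply continuous_id.div
      · exact Complex.continuous_ofReal.comp (by fun_prop)
      · intro z; exact_mod_cast (hpos z).ne'
    · intro z
      simp only [Metric.mem_closedBall, dist_zero_right, norm_div, Complex.norm_real]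
      rw [Real.norm_of_nonneg (hpos z).le]
      exact div_le_one_of_le₀ (le_max_right _ _) (hpos z).le
  have hFe : ∀ z : ℂ, ‖z‖ ≤ 1 → F z = f z := fun z hz => by simp [hF, max_eq_left hz]
  have hFinj : ∀ z w : ℂ, ‖z‖ ≤ 1 → ‖w‖ ≤ 1 → F z = F w → z = w := fun z w hz hw h => by
    rw [hFe z hz, hFe w hw] at h
    exact hinj (by simpa using hz) (by simpa using hw) h
  -- clamp
  set c : ℝ → ℝ := fun t => max 0 (min 1 t) with hc
  have hcc : Continuous c := by fun_prop
  have hc0 : ∀ t, 0 ≤ c t := fun t => le_max_left _ _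
  have hc1 : ∀ t, c t ≤ 1 := fun t => max_le zero_le_one (min_le_left _ _)
  -- a lower bound on the circle
  obtain ⟨z0, -, hz0⟩ := (isCompact_univ (X := Circle)).exists_isMinOn univ_nonempty
    (f := fun z : Circle => ‖F z - F 0‖) (by fun_prop)
  have hm : 0 < ‖F z0 - F 0‖ := by
    rw [norm_pos_iff, sub_ne_zero]
    intro h
    exact Circle.coe_ne_zero z0 (hFinj z0 0 (Circle.norm_coe z0).le (by simp) h)
  have hw : ∃ w, ‖w - F 0‖ < ‖F z0 - F 0‖ ∧ w ∉ f '' Metric.closedBall 0 1 := by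
    by_contra hno
    push Not at hno
    apply hcon
    rw [Metric.mem_nhds_iff]
    refine ⟨_, hm, fun w hw => hno w ?_⟩
    rw [Metric.mem_ball, dist_eq_norm] at hw
    rwa [← hFe 0 (by simp)] at hw
  obtain ⟨w, hw1, hw2⟩ := hw
  have hFw : ∀ z, ‖z‖ ≤ 1 → F z ≠ w := fun z hz h => hw2 ⟨z, by simpa using hz, by rw [← hFe z hz, h]⟩
  have hnc : ∀ (t : ℝ) (z : Circle), ‖((c t : ℝ) : ℂ) * z‖ ≤ 1 := fun t z => by
    rw [norm_mul, Circle.norm_coe, mul_one, Complex.norm_real, Real.norm_eq_abs, abs_of_nonneg (hc0 t)]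
    exact hc1 t
  -- step 1
  have s1 : HasLog (fun z : Circle => F (((c 1 : ℝ) : ℂ) * z) - w) := by
    apply HasLog.homotopy (fun t (z : Circle) => F (((c t : ℝ) : ℂ) * z) - w) _ _ 0 1
    · refine ⟨fun _ => Complex.log (F 0 - w), continuous_const, fun x => ?_⟩
      rw [Complex.exp_log (sub_ne_zero.2 (hFw 0 (by simp)))]
      simp [hc]
    · fun_prop
    · exact fun t z => sub_ne_zero.2 (hFw _ (hnc t z))
  have s2 : HasLog (fun z : Circle => F z - (w + ((c 1 : ℝ) : ℂ) * (F 0 - w))) := by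
    apply HasLog.homotopy (fun t (z : Circle) => F z - (w + ((c t : ℝ) : ℂ) * (F 0 - w))) _ _ 0 1
    · convert s1 using 2 with z
      simp [hc]
    · fun_prop
    · intro t z h
      have h1 := hz0 (mem_univ z)
      simp only [mem_ofPred_eq] at h1
      have : F z - F 0 = (1 - ((c t : ℝ):ℂ)) * (w - F 0) := by linear_combination h
      rw [this, norm_mul] at h1
      have h2 : ‖(1 - ((c t : ℝ):ℂ))‖ ≤ 1 := by
        rw [← Complex.ofReal_one, ← Complex.ofReal_sub, Complex.norm_real, Real.norm_eq_abs, abs_le]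
        constructor <;> linarith [hc0 t, hc1 t]
      nlinarith [norm_nonneg (w - F 0)]
  have s3 : HasLog (fun z : Circle => F (((1 / (1 + c 1) : ℝ) : ℂ) * z)
      - F ((( - c 1 / (1 + c 1) : ℝ) : ℂ) * z)) := by
    have hp : ∀ t, 0 < 1 + c t := fun t => by linarith [hc0 t]
    apply HasLog.homotopy (fun t (z : Circle) => F (((1 / (1 + c t) : ℝ) : ℂ) * z)
      - F ((( - c t / (1 + c t) : ℝ) : ℂ) * z)) _ _ 0 1
    · convert s2 using 2 with z
      simp [hc]
    · have c1 : Continuous fun t => 1 / (1 + c t) := by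
        exact continuous_const.div (by fun_prop) fun t => (hp t).ne'
      have c2 : Continuous fun t => - c t / (1 + c t) := by
        exact (by fun_prop : Continuous fun t => - c t).div (by fun_prop) fun t => (hp t).ne'
      exact (hFc.comp ((Complex.continuous_ofReal.comp (c1.comp continuous_fst)).mul
        (continuous_induced_dom.comp continuous_snd))).sub
        (hFc.comp ((Complex.continuous_ofReal.comp (c2.comp continuous_fst)).mul
        (continuous_induced_dom.comp continuous_snd)))
    · intro t z
      rw [sub_ne_zero]
      intro h
      have := hFinj _ _ ?_ ?_ h
      · have h3 := mul_right_cancel₀ (Circle.coe_ne_zero z) this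
        have h4 : (1 / (1 + c t) : ℝ) = - c t / (1 + c t) := by exact_mod_cast h3
        rw [div_left_inj' (hp t).ne'] at h4
        linarith [hc0 t]
      · rw [norm_mul, Complex.norm_real, Circle.norm_coe, mul_one, Real.norm_eq_abs,
          abs_of_pos (by have := hp t; positivity), div_le_one (hp t)]
        linarith [hc0 t]
      · rw [norm_mul, Complex.norm_real, Circle.norm_coe, mul_one, Real.norm_eq_abs, neg_div, abs_neg,
          abs_of_nonneg (div_nonneg (hc0 t) (hp t).le), div_le_one (hp t)]
        linarith [hc0 t]
  have hc11 : c 1 = 1 := by simp [hc]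
  rw [hc11] at s3
  refine not_hasLog_odd _ (fun z => ?_) (fun z => ?_) s3
  · have e1 : (((1 / (1 + 1) : ℝ) : ℂ) * ((-z : Circle) : ℂ)) = ((-1 / (1 + 1) : ℝ) : ℂ) * z := by
      have : ((-z : Circle) : ℂ) = - z := by simp
      rw [this]; push_cast; ring
    have e2 : (((-1 / (1 + 1) : ℝ) : ℂ) * ((-z : Circle) : ℂ)) = ((1 / (1 + 1) : ℝ) : ℂ) * z := by
      have : ((-z : Circle) : ℂ) = - z := by simp
      rw [this]; push_cast; ring
    simp only [e1, e2]
    ring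
  · rw [sub_ne_zero]
    intro h
    have := hFinj _ _ ?_ ?_ h
    · have h3 := mul_right_cancel₀ (Circle.coe_ne_zero z) this
      have h4 : (1 / (1 + 1) : ℝ) = - 1 / (1 + 1) := by exact_mod_cast h3
      norm_num at h4
    · rw [norm_mul, Complex.norm_real, Circle.norm_coe, mul_one]; norm_num
    · rw [norm_mul, Complex.norm_real, Circle.norm_coe, mul_one]; norm_num

/-- Invariance of domain for `E2`. -/
lemma invariance_of_domain (f : E2 → E2) {U : Set E2} (hU : IsOpen U) (hf : ContinuousOn f U)
    (hinj : InjOn f U) : IsOpen (f '' U) := by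
  rw [isOpen_iff_mem_nhds]
  rintro _ ⟨p, hp, rfl⟩
  obtain ⟨r, hr, hrU⟩ := Metric.nhds_basis_closedBall.mem_iff.1 (hU.mem_nhds hp)
  set e : ℂ ≃ₗᵢ[ℝ] E2 := Complex.orthonormalBasisOneI.repr with he
  set k : ℂ → E2 := fun z => p + r • e z with hk
  have hkc : Continuous k := by fun_prop
  have hkm : ∀ z ∈ Metric.closedBall (0:ℂ) 1, k z ∈ Metric.closedBall p r := fun z hz => by
    simp only [Metric.mem_closedBall, dist_zero_right] at hz
    simp only [hk, Metric.mem_closedBall, dist_self_add_left, norm_smul, e.norm_map,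
      Real.norm_of_nonneg hr.le]
    nlinarith
  have hki : Function.Injective k := fun z w h => by
    simp only [hk, add_right_inj] at h
    exact e.injective (smul_right_injective _ hr.ne' h)
  have := invariance_of_domain_unit (fun z => e.symm (f (k z)))
    (e.symm.continuous.comp_continuousOn (hf.comp hkc.continuousOn fun z hz => hrU (hkm z hz)))
    (fun z hz w hw h => hki (hinj (hrU (hkm z hz)) (hrU (hkm w hw)) (e.symm.injective h)))
  have h2 := (e.toHomeomorph.isOpenMap.image_mem_nhds this)
  have h3 : k 0 = p := by simp [hk]
  simp only [h3] at h2
  refine Filter.mem_of_superset (by simpa using h2) ?_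
  rintro _ ⟨_, ⟨z, hz, rfl⟩, rfl⟩
  exact ⟨k z, hrU (hkm z hz), by simp⟩


lemma rank_E2 : 1 < Module.rank ℝ E2 := by
  have h : Module.finrank ℝ E2 = 2 := by simp
  rw [← Module.finrank_eq_rank, h]; norm_num

lemma annInt_preconnected : IsPreconnected {x : E2 | 1 < ‖x‖ ∧ ‖x‖ < 2} := by
  have h1 : IsPreconnected ((Ioo (1:ℝ) 2) ×ˢ Metric.sphere (0:E2) 1) :=
    isPreconnected_Ioo.prod (isPreconnected_sphere rank_E2 _ _)
  have h2 := h1.image (fun p : ℝ × E2 => p.1 • p.2) (by fun_prop)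
  convert h2 using 1
  ext x
  constructor
  · rintro ⟨h1, h2⟩
    have h0 : ‖x‖ ≠ 0 := by linarith
    refine ⟨(‖x‖, ‖x‖⁻¹ • x), ⟨⟨h1, h2⟩, ?_⟩, ?_⟩
    · simp [norm_smul, h0]
    · simp [smul_smul, h0]
  · rintro ⟨⟨r, y⟩, ⟨⟨h1, h2⟩, hy⟩, rfl⟩
    simp only [mem_sphere_iff_norm, sub_zero] at hy
    simp only at h1 h2
    simp [norm_smul, hy, abs_of_pos (by linarith : 0 < r), h1, h2]

lemma stdAnnulus_compact : IsCompact stdAnnulus := by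
  apply Metric.isCompact_of_isClosed_isBounded
  · exact (isClosed_le continuous_const continuous_norm).inter
      (isClosed_le continuous_norm continuous_const)
  · refine (Metric.isBounded_closedBall (x := (0:E2)) (r := 2)).subset fun x hx => ?_
    simpa using hx.2

lemma interior_stdAnnulus {p : E2} (hp : p ∈ interior stdAnnulus) : 1 < ‖p‖ ∧ ‖p‖ < 2 := by
  have hA := interior_subset hp
  have hc : Filter.Tendsto (fun s : ℝ => s • p) (nhds 1) (nhds p) := by
    have : Continuous fun s : ℝ => s • p := by fun_prop
    simpa using this.tendsto 1
  have h1 := hc.eventually (isOpen_interior.mem_nhds hp)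
  obtain ⟨ε, hε, hb⟩ := Metric.eventually_nhds_iff.1 h1
  have e1 := interior_subset (hb (y := 1 - ε/2) (by simp [abs_of_pos hε]; linarith))
  have e2 := interior_subset (hb (y := 1 + ε/2) (by simp [abs_of_pos hε]; linarith))
  simp only [stdAnnulus, mem_ofPred_eq, norm_smul, Real.norm_eq_abs] at e1 e2 hA
  rw [abs_of_pos (by linarith : 0 < 1 + ε/2)] at e2
  constructor
  · by_contra hn
    have : ‖p‖ = 1 := le_antisymm (not_lt.1 hn) hA.1
    rw [this, mul_one] at e1
    have := e1.1
    by_cases h : 0 ≤ 1 - ε/2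
    · rw [abs_of_nonneg h] at this; linarith
    · have e3 := interior_subset (hb (y := 1 - min (ε/2) (1/2)) (by
        have : 0 < min (ε/2) (1/2) := by positivity
        rw [Real.dist_eq, show 1 - min (ε/2) (1/2) - 1 = -min (ε/2) (1/2) by ring, abs_neg, abs_of_pos this]
        linarith [min_le_left (ε/2) (1/2:ℝ)]))
      have h4 := e3.1
      simp only [norm_smul, Real.norm_eq_abs] at h4
      have h5 : 0 < min (ε/2) (1/2) := by positivity
      have h6 : min (ε/2) (1/2) ≤ 1/2 := min_le_right _ _
      rw [abs_of_pos (by linarith), ‹‖p‖ = 1›] at h4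
      linarith
  · by_contra hn
    have : ‖p‖ = 2 := le_antisymm hA.2 (not_lt.1 hn)
    rw [this] at e2
    linarith [e2.2]

structure AnnData (Ω : Set E2) (ω : E2 → ℝ) (a b : ℝ) : Prop where
  lt : a < b
  range : ∀ x ∈ closure Ω, ω x ∈ Icc a b
  int : ∀ x ∈ closure Ω, ω x ∈ Ioo a b → x ∈ interior (closure Ω)
  int' : ∀ x ∈ interior (closure Ω), ω x ∈ Ioo a b
  front : ∀ x ∈ closure Ω, ω x = a ∨ ω x = b → x ∈ frontier Ω
  conI : IsConnected (interior (closure Ω))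
  conA : IsPreconnected {x ∈ closure Ω | ω x = a}
  conB : IsPreconnected {x ∈ closure Ω | ω x = b}
  surj : ∀ y ∈ Icc a b, ∃ x ∈ closure Ω, ω x = y

lemma annData
    (Ω : Set E2) (hΩo : IsOpen Ω)
    (hann : ∃ Φ : E2 → E2, ContDiff ℝ (⊤ : ℕ∞) Φ ∧ InjOn Φ stdAnnulus ∧
      Φ '' stdAnnulus = closure Ω)
    (ω : E2 → ℝ) (hω : ContDiff ℝ (⊤ : ℕ∞) ω)
    (hcrit : ∀ x ∈ closure Ω, gradient ω x ≠ 0)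
    (hωlc : ∀ x ∈ frontier Ω, ∀ y ∈ connectedComponentIn (frontier Ω) x, ω y = ω x) :
    ∃ a b, AnnData Ω ω a b := by
  obtain ⟨Φ, hΦ, hinj, himg⟩ := hann
  set K := closure Ω with hK
  have hAK : ∀ p ∈ stdAnnulus, Φ p ∈ K := fun p hp => himg ▸ mem_image_of_mem _ hp
  have hKc : IsCompact K := himg ▸ stdAnnulus_compact.image hΦ.continuous
  set Ai := {x : E2 | 1 < ‖x‖ ∧ ‖x‖ < 2} with hAi
  have hAiA : Ai ⊆ stdAnnulus := fun x hx => ⟨hx.1.le, hx.2.le⟩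
  have hAio : IsOpen Ai := (isOpen_lt continuous_const continuous_norm).inter
      (isOpen_lt continuous_norm continuous_const)
  have hOo : IsOpen (Φ '' Ai) :=
    invariance_of_domain Φ hAio hΦ.continuous.continuousOn (hinj.mono hAiA)
  have hOK : Φ '' Ai ⊆ interior K := interior_maximal (by
    rintro _ ⟨p, hp, rfl⟩; exact hAK p (hAiA hp)) hOo
  -- inverse
  set Ψ := Function.invFunOn Φ stdAnnulus with hΨ
  have hΨΦ : ∀ p ∈ stdAnnulus, Ψ (Φ p) = p := fun p hp => hinj.leftInvOn_invFunOn hp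
  have hΨA : ∀ x ∈ K, Ψ x ∈ stdAnnulus ∧ Φ (Ψ x) = x := fun x hx => by
    rw [← himg] at hx
    obtain ⟨p, hp, rfl⟩ := hx
    rw [hΨΦ p hp]; exact ⟨hp, rfl⟩
  have hΨc : ContinuousOn Ψ K := by
    rw [← himg]
    rw [continuousOn_iff_isClosed]
    intro t ht
    refine ⟨Φ '' (stdAnnulus ∩ t), ?_, ?_⟩
    · exact ((stdAnnulus_compact.inter_right ht).image hΦ.continuous).isClosed
    · ext x; constructor
      · rintro ⟨h1, p, hp, rfl⟩
        refine ⟨⟨p, ⟨hp, ?_⟩, rfl⟩, p, hp, rfl⟩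
        have : Ψ (Φ p) ∈ t := h1
        rwa [hΨΦ p hp] at this
      · rintro ⟨⟨p, ⟨hp, hpt⟩, rfl⟩, -⟩
        refine ⟨?_, p, hp, rfl⟩
        change Ψ (Φ p) ∈ t
        rwa [hΨΦ p hp]
  have hΨi : InjOn Ψ K := fun x hx y hy h => by
    rw [← (hΨA x hx).2, ← (hΨA y hy).2, h]
  have hIo : IsOpen (Ψ '' interior K) := invariance_of_domain Ψ isOpen_interior
    (hΨc.mono interior_subset) (hΨi.mono interior_subset)
  have hIA : Ψ '' interior K ⊆ interior stdAnnulus := interior_maximal (by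
    rintro _ ⟨x, hx, rfl⟩; exact (hΨA x (interior_subset hx)).1) hIo
  have hIntg : interior K = Φ '' Ai := by
    apply Subset.antisymm _ hOK
    intro x hx
    exact ⟨Ψ x, interior_stdAnnulus (hIA ⟨x, hx, rfl⟩), (hΨA x (interior_subset hx)).2⟩
  have hfr : ∀ x ∈ K, x ∉ interior K → x ∈ frontier Ω := fun x hx hn => by
    refine ⟨hx, fun h => hn (interior_mono subset_closure h)⟩
  have hsp : ∀ r : ℝ, (r = 1 ∨ r = 2) → ∀ p ∈ Metric.sphere (0:E2) r, p ∈ stdAnnulus ∧ Φ p ∈ frontier Ω := by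
    intro r hr p hp
    have hn : ‖p‖ = r := by simpa using hp
    have hpA : p ∈ stdAnnulus := by
      refine ⟨?_, ?_⟩ <;> rcases hr with rfl | rfl <;> linarith
    refine ⟨hpA, hfr _ (hAK p hpA) ?_⟩
    rw [hIntg]
    rintro ⟨q, hq, he⟩
    have := hinj (hAiA hq) hpA he
    subst this
    have h1 := hq.1
    have h2 := hq.2
    rcases hr with rfl | rfl <;> linarith
  have hcon : ∀ r : ℝ, IsPreconnected (Φ '' Metric.sphere (0:E2) r) := fun r =>
    (isPreconnected_sphere rank_E2 _ _).image _ hΦ.continuous.continuousOn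
  have hconst : ∀ r : ℝ, (r = 1 ∨ r = 2) → ∀ x ∈ Φ '' Metric.sphere (0:E2) r,
      ∀ y ∈ Φ '' Metric.sphere (0:E2) r, ω y = ω x := by
    intro r hr x hx y hy
    have hsub : Φ '' Metric.sphere (0:E2) r ⊆ frontier Ω := by
      rintro _ ⟨p, hp, rfl⟩; exact (hsp r hr p hp).2
    exact hωlc x (hsub hx) y ((hcon r).subset_connectedComponentIn hx hsub hy)
  -- nonempty spheres
  have hspne : ∀ r : ℝ, 0 ≤ r → ∃ p : E2, p ∈ Metric.sphere (0:E2) r := fun r hr =>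
    ⟨EuclideanSpace.single 0 r, by simp [abs_of_nonneg hr]⟩
  obtain ⟨p1, hp1⟩ := hspne 1 (by norm_num)
  obtain ⟨p2, hp2⟩ := hspne 2 (by norm_num)
  have hK1 : ∀ x ∈ K, x ∉ interior K → x ∈ Φ '' Metric.sphere (0:E2) 1 ∨ x ∈ Φ '' Metric.sphere (0:E2) 2 := by
    intro x hx hn
    rw [← himg] at hx
    obtain ⟨p, hp, rfl⟩ := hx
    rw [hIntg] at hn
    by_contra hcon
    push Not at hcon
    apply hn
    refine ⟨p, ⟨lt_of_le_of_ne hp.1 fun h => hcon.1 ⟨p, by simp [← h], rfl⟩,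
      lt_of_le_of_ne hp.2 fun h => hcon.2 ⟨p, by simp [h], rfl⟩⟩, rfl⟩
  have hKne : K.Nonempty := ⟨_, hAK p1 (hsp 1 (Or.inl rfl) p1 hp1).1⟩
  obtain ⟨xM, hxM, hM⟩ := hKc.exists_isMaxOn hKne hω.continuous.continuousOn
  obtain ⟨xm, hxm, hm⟩ := hKc.exists_isMinOn hKne hω.continuous.continuousOn
  have hnoext : ∀ x ∈ interior K, ¬ IsLocalExtr ω x := fun x hx h => by
    apply hcrit x (interior_subset hx)
    rw [gradient, h.fderiv_eq_zero]; simp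
  have hIM : ∀ x ∈ interior K, ω x < ω xM := fun x hx => by
    refine lt_of_le_of_ne (hM (interior_subset hx)) fun h => hnoext x hx (Or.inr ?_)
    filter_upwards [isOpen_interior.mem_nhds hx] with y hy
    rw [h]; exact hM (interior_subset hy)
  have hIm : ∀ x ∈ interior K, ω xm < ω x := fun x hx => by
    refine lt_of_le_of_ne (hm (interior_subset hx)) fun h => hnoext x hx (Or.inl ?_)
    filter_upwards [isOpen_interior.mem_nhds hx] with y hy
    rw [← h]; exact hm (interior_subset hy)
  have hIne : (interior K).Nonempty := by
    rw [hIntg]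
    refine ⟨_, EuclideanSpace.single 0 (3/2), ⟨?_, ?_⟩, rfl⟩ <;> simp <;> norm_num [abs_of_pos]
  have hlt : ω xm < ω xM := by
    obtain ⟨x, hx⟩ := hIne
    exact (hIm x hx).trans (hIM x hx)
  have hnM : xM ∉ interior K := fun h => (hIM _ h).false
  have hnm : xm ∉ interior K := fun h => (hIm _ h).false
  have hbd : ∀ x ∈ K, x ∉ interior K → ω x = ω xm ∨ ω x = ω xM := by
    intro x hx hn
    have c1 := hconst 1 (Or.inl rfl)
    have c2 := hconst 2 (Or.inr rfl)
    rcases hK1 x hx hn with h | h <;> rcases hK1 xM hxM hnM with h1 | h1 <;>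
      rcases hK1 xm hxm hnm with h2 | h2
    · left; exact c1 _ h2 _ h
    · right; exact c1 _ h1 _ h
    · left; exact c1 _ h2 _ h
    · exact absurd (c2 _ h1 _ h2) hlt.ne
    · exact absurd (c1 _ h1 _ h2) hlt.ne
    · left; exact c2 _ h2 _ h
    · right; exact c2 _ h1 _ h
    · left; exact c2 _ h2 _ h
  have hlevel : ∀ z ∈ K, z ∉ interior K → (∀ x ∈ interior K, ω x ≠ ω z) →
      (∃ z' ∈ K, z' ∉ interior K ∧ ω z' ≠ ω z) → IsPreconnected {x ∈ K | ω x = ω z} := by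
    rintro z hz hn hne ⟨z', hz', hn', hne'⟩
    have c1 := hconst 1 (Or.inl rfl)
    have c2 := hconst 2 (Or.inr rfl)
    rcases hK1 z hz hn with h | h <;> rcases hK1 z' hz' hn' with h1 | h1
    · exact absurd (c1 _ h _ h1) hne'
    · convert hcon 1 using 1
      ext x; constructor
      · rintro ⟨hx, hxz⟩
        rcases hK1 x hx (fun hi => hne x hi hxz) with h3 | h3
        · exact h3
        · exact absurd ((c2 _ h3 _ h1).trans hxz) hne'
      · intro h3
        refine ⟨?_, c1 _ h _ h3⟩
        obtain ⟨p, hp, rfl⟩ := h3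
        exact hAK p (hsp 1 (Or.inl rfl) p hp).1
    · convert hcon 2 using 1
      ext x; constructor
      · rintro ⟨hx, hxz⟩
        rcases hK1 x hx (fun hi => hne x hi hxz) with h3 | h3
        · exact absurd ((c1 _ h3 _ h1).trans hxz) hne'
        · exact h3
      · intro h3
        refine ⟨?_, c2 _ h _ h3⟩
        obtain ⟨p, hp, rfl⟩ := h3
        exact hAK p (hsp 2 (Or.inr rfl) p hp).1
    · exact absurd (c2 _ h _ h1) hne'
  have hconI : IsConnected (interior K) := ⟨hIne, by
    rw [hIntg]; exact annInt_preconnected.image _ hΦ.continuous.continuousOn⟩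
  have hKcon : IsPreconnected K := by
    have h1 : Ω ⊆ interior K := interior_maximal subset_closure hΩo
    have : K = closure (interior K) := Subset.antisymm (closure_mono h1)
      (closure_minimal interior_subset isClosed_closure)
    rw [this]; exact hconI.isPreconnected.closure
  refine ⟨ω xm, ω xM, hlt, fun x hx => ⟨hm hx, hM hx⟩, ?_, fun x hx => ⟨hIm x hx, hIM x hx⟩, ?_, hconI,
    ?_, ?_, ?_⟩
  · intro x hx hxx
    by_contra hn
    rcases hbd x hx hn with h | h
    · exact absurd hxx.1 (by rw [h]; exact lt_irrefl _)
    · exact absurd hxx.2 (by rw [h]; exact lt_irrefl _)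
  · intro x hx h
    refine hfr x hx fun hi => ?_
    rcases h with h | h
    · exact absurd (hIm x hi) (by rw [h]; exact lt_irrefl _)
    · exact absurd (hIM x hi) (by rw [h]; exact lt_irrefl _)
  · exact hlevel xm hxm hnm (fun x hx => (hIm x hx).ne') ⟨xM, hxM, hnM, hlt.ne'⟩
  · exact hlevel xM hxM hnM (fun x hx => (hIM x hx).ne) ⟨xm, hxm, hnm, hlt.ne⟩
  · intro y hy
    obtain ⟨x, hx, h⟩ := hKcon.intermediate_value hxm hxM hω.continuous.continuousOn hy
    exact ⟨x, hx, h⟩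


structure IsFlow (v : E2 → E2) (φ : ℝ → E2 → E2) : Prop where
  zero : ∀ x, φ 0 x = x
  deriv : ∀ x t, HasDerivAt (fun t => φ t x) (v (φ t x)) t

lemma exists_flow (v : E2 → E2) (K L : NNReal) (hv : LipschitzWith K v) (hb : ∀ x, ‖v x‖ ≤ L) :
    ∃ φ, IsFlow v φ := by
  suffices h : ∀ x, ∃ γ : ℝ → E2, γ 0 = x ∧ ∀ t, HasDerivAt γ (v (γ t)) t by
    choose γ h0 h1 using h
    exact ⟨fun t x => γ x t, h0, fun x t => h1 x t⟩
  intro x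
  have hloc : ∀ n : ℕ, ∃ α : ℝ → E2, α 0 = x ∧ ∀ t ∈ Ioo (-(n+1:ℝ)) (n+1), HasDerivAt α (v (α t)) t := by
    intro n
    have hpl : IsPicardLindelof (fun _ => v) (tmin := -(n+1:ℝ)) (tmax := (n+1:ℝ))
        (⟨0, by constructor <;> linarith [(Nat.cast_nonneg n : (0:ℝ) ≤ n)]⟩ : Icc (-(n+1:ℝ)) (n+1:ℝ)) x
        (L * (n+1)) 0 L K := by
      apply IsPicardLindelof.of_time_independent
      · exact fun x _ => hb x
      · exact hv.lipschitzOnWith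
      · simp
    obtain ⟨α, h0, h1⟩ := hpl.exists_eq_forall_mem_Icc_hasDerivWithinAt₀
    exact ⟨α, h0, fun t ht => (h1 t (Ioo_subset_Icc_self ht)).hasDerivAt (Icc_mem_nhds ht.1 ht.2)⟩
  choose α h0 h1 using hloc
  have hag : ∀ n m : ℕ, n ≤ m → ∀ t ∈ Ioo (-(n+1:ℝ)) (n+1), α n t = α m t := by
    intro n m hnm t ht
    have hnm' : (n:ℝ) ≤ m := by exact_mod_cast hnm
    have := ODE_solution_unique_of_mem_Ioo (v := fun _ => v) (s := fun _ => univ) (K := K)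
      (f := α n) (g := α m) (t₀ := 0) (a := -(n+1:ℝ)) (b := n+1)
      (fun t _ => hv.lipschitzOnWith) (by constructor <;> linarith [(Nat.cast_nonneg n : (0:ℝ) ≤ n)])
      (fun t ht => ⟨h1 n t ht, trivial⟩)
      (fun t ht => ⟨h1 m t ⟨by linarith [ht.1], by linarith [ht.2]⟩, trivial⟩) (by rw [h0, h0])
    exact this ht
  refine ⟨fun t => α ⌈|t|⌉₊ t, by simp [h0], fun t => ?_⟩
  set n := ⌈|t|⌉₊ + 1 with hn
  have hmem : ∀ s : ℝ, s ∈ Ioo (-(⌈|s|⌉₊+1:ℝ)) (⌈|s|⌉₊+1) := fun s => by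
    have := Nat.le_ceil |s|
    have := abs_le.1 this
    constructor <;> linarith
  have hev : (fun t => α ⌈|t|⌉₊ t) =ᶠ[nhds t] α n := by
    have : ∀ᶠ s in nhds t, |s| < |t| + 1 :=
      continuous_abs.continuousAt.eventually_lt continuousAt_const (by linarith)
    filter_upwards [this] with s hs
    apply hag _ _ _ _ (hmem s)
    rw [hn]
    apply Nat.ceil_le.2
    push_cast
    linarith [Nat.le_ceil |t|]
  have h2 := h1 n t (by
    have := Nat.le_ceil |t|
    have := abs_le.1 this
    rw [hn]; push_cast
    constructor <;> linarith)
  have h3 := h2.congr_of_eventuallyEq hev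
  rwa [← hev.eq_of_nhds] at h3

lemma IsFlow.unique {v : E2 → E2} {φ : ℝ → E2 → E2} (h : IsFlow v φ) {K : NNReal}
    (hv : LipschitzWith K v) (γ : ℝ → E2) (hγ : ∀ t, HasDerivAt γ (v (γ t)) t) (t : ℝ) :
    γ t = φ t (γ 0) := by
  have := ODE_solution_unique_univ (v := fun _ => v) (s := fun _ => univ) (K := K) (t₀ := 0)
    (f := γ) (g := fun t => φ t (γ 0)) (fun _ => hv.lipschitzOnWith) (fun t => ⟨hγ t, trivial⟩)
    (fun t => ⟨h.deriv _ t, trivial⟩) (by simp [h.zero])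
  exact congrFun this t

lemma IsFlow.add {v : E2 → E2} {φ : ℝ → E2 → E2} (h : IsFlow v φ) {K : NNReal}
    (hv : LipschitzWith K v) (s t : ℝ) (x : E2) : φ (s + t) x = φ s (φ t x) := by
  have := h.unique hv (fun s => φ (s + t) x) (fun s => by
    simpa using (h.deriv x (s + t)).comp_add_const s t) s
  simpa using this

lemma IsFlow.dist_le {v : E2 → E2} {φ : ℝ → E2 → E2} (h : IsFlow v φ) {K : NNReal}
    (hv : LipschitzWith K v) (t : ℝ) (x y : E2) :
    dist (φ t x) (φ t y) ≤ dist x y * Real.exp (K * |t|) := by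
  have hc : ∀ x, Continuous fun t => φ t x := fun x =>
    continuous_iff_continuousAt.2 fun t => (h.deriv x t).continuousAt
  rcases le_total 0 t with ht | ht
  · have := dist_le_of_trajectories_ODE (v := fun _ => v) (K := K) (f := fun t => φ t x)
      (g := fun t => φ t y) (a := 0) (b := t) (δ := dist x y) (fun _ => hv)
      (hc x).continuousOn (fun s _ => (h.deriv x s).hasDerivWithinAt)
      (hc y).continuousOn (fun s _ => (h.deriv y s).hasDerivWithinAt) (by simp [h.zero]) t ⟨ht, le_rfl⟩
    simpa [abs_of_nonneg ht] using this
  · have hd : ∀ x s, HasDerivAt (fun s => φ (-s) x) (- v (φ (-s) x)) s := fun x s => by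
      have := (h.deriv x (-s)).scomp s (hasDerivAt_neg s)
      simp only [neg_smul, one_smul] at this
      exact this
    have hv' : LipschitzWith K (fun x => - v x) := by
      intro x y; simpa [edist_neg_neg] using hv x y
    have := dist_le_of_trajectories_ODE (v := fun _ x => - v x) (K := K) (f := fun t => φ (-t) x)
      (g := fun t => φ (-t) y) (a := 0) (b := -t) (δ := dist x y) (fun _ => hv')
      ((hc x).comp continuous_neg).continuousOn (fun s _ => (hd x s).hasDerivWithinAt)
      ((hc y).comp continuous_neg).continuousOn (fun s _ => (hd y s).hasDerivWithinAt)
      (by simp [h.zero]) (-t) ⟨by linarith, le_rfl⟩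
    simpa [abs_of_nonpos ht] using this

lemma IsFlow.continuous {v : E2 → E2} {φ : ℝ → E2 → E2} (h : IsFlow v φ) {K : NNReal}
    (hv : LipschitzWith K v) : Continuous fun p : ℝ × E2 => φ p.1 p.2 := by
  rw [continuous_iff_continuousAt]
  rintro ⟨t, x⟩
  rw [ContinuousAt, tendsto_iff_dist_tendsto_zero]
  have hc : Continuous fun t => φ t x :=
    continuous_iff_continuousAt.2 fun t => (h.deriv x t).continuousAt
  have hlim : Filter.Tendsto (fun p : ℝ × E2 => dist p.2 x * Real.exp (K * |p.1|)
      + dist (φ p.1 x) (φ t x)) (nhds (t, x)) (nhds 0) := by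
    have : Continuous fun p : ℝ × E2 => dist p.2 x * Real.exp (K * |p.1|)
      + dist (φ p.1 x) (φ t x) := by fun_prop
    simpa using this.tendsto (t, x)
  refine squeeze_zero (fun _ => dist_nonneg) (fun p => ?_) hlim
  exact (dist_triangle _ (φ p.1 x) _).trans (add_le_add_left (h.dist_le hv _ _ _) _)

/-- a cutoff vector field -/
lemma exists_cutoff {K U : Set E2} (hK : IsCompact K) (hU : IsOpen U) (hKU : K ⊆ U) :
    ∃ β : E2 → ℝ, ContDiff ℝ (⊤ : ℕ∞) β ∧ HasCompactSupport β ∧ tsupport β ⊆ U ∧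
      ∃ V, IsOpen V ∧ K ⊆ V ∧ ∀ x ∈ V, β x = 1 := by
  obtain ⟨K1, hK1, h1, h2⟩ := exists_compact_between hK hU hKU
  obtain ⟨f, hf1, hf0, -⟩ := exists_contMDiffMap_one_nhds_of_subset_interior
    (I := modelWithCornersSelf ℝ E2) (n := (⊤ : ℕ∞)) hK.isClosed h1
  have hsupp : tsupport (f : E2 → ℝ) ⊆ K1 := by
    apply closure_minimal _ hK1.isClosed
    intro x hx
    by_contra hcon
    exact hx (hf0 x hcon)
  refine ⟨f, f.contMDiff.contDiff, HasCompactSupport.of_support_subset_isCompact hK1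
    ((subset_tsupport _).trans hsupp), hsupp.trans h2, ?_⟩
  obtain ⟨V, hV, hKV, h⟩ := eventually_nhdsSet_iff_exists.1 hf1
  exact ⟨V, hV, hKV, h⟩


/-- superposition operator -/
def nem {E F : Type} [NormedAddCommGroup E] [NormedAddCommGroup F]
    (v : C(E, F)) (u : C(unitInterval, E)) : C(unitInterval, F) := v.comp u

def nemL (E F : Type) [NormedAddCommGroup E] [NormedSpace ℝ E] [NormedAddCommGroup F] [NormedSpace ℝ F] :
    C(unitInterval, E →L[ℝ] F) →L[ℝ] C(unitInterval, E) →L[ℝ] C(unitInterval, F) :=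
  LinearMap.mkContinuous₂
    (LinearMap.mk₂ ℝ (fun (A : C(unitInterval, E →L[ℝ] F)) (h : C(unitInterval, E)) => (⟨fun s => A s (h s), by fun_prop⟩ : C(unitInterval, F)))
      (fun _ _ _ => by ext; simp) (fun _ _ _ => by ext; simp)
      (fun _ _ _ => by ext; simp) (fun _ _ _ => by ext; simp)) 1 (by
    intro A h
    rw [ContinuousMap.norm_le _ (by positivity)]
    intro s
    simp only [one_mul]
    exact ((A s).le_opNorm _).trans (mul_le_mul (A.norm_coe_le_norm s) (h.norm_coe_le_norm s)
      (norm_nonneg _) (by positivity)))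

@[simp] lemma nemL_apply {E F : Type} [NormedAddCommGroup E] [NormedSpace ℝ E] [NormedAddCommGroup F]
    [NormedSpace ℝ F] (A : C(unitInterval, E →L[ℝ] F)) (h : C(unitInterval, E)) (s : unitInterval) :
    nemL E F A h s = A s (h s) := rfl

lemma nem_hasFDerivAt {E F : Type} [NormedAddCommGroup E] [NormedSpace ℝ E] [NormedAddCommGroup F]
    [NormedSpace ℝ F] (v : C(E, F)) (v' : C(E, E →L[ℝ] F)) (hv : ∀ x, HasStrictFDerivAt v (v' x) x)
    (u : C(unitInterval, E)) : HasFDerivAt (nem v) (nemL E F (nem v' u)) u := by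
  rw [hasFDerivAt_iff_isLittleO_nhds_zero, Asymptotics.isLittleO_iff]
  intro ε hε
  have key : ∀ᶠ k : E in nhds 0, ∀ s ∈ (univ : Set unitInterval),
      ‖v (u s + k) - v (u s) - v' (u s) k‖ ≤ ε * ‖k‖ := by
    apply isCompact_univ.eventually_forall_of_forall_eventually
    intro s0 _
    have h1 := (Asymptotics.isLittleO_iff.1 (hv (u s0)).isLittleO) (half_pos hε)
    have ht : Filter.Tendsto (fun z : E × unitInterval => (u z.2 + z.1, u z.2)) (nhds (0, s0))
        (nhds (u s0, u s0)) := by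
      have : Continuous (fun z : E × unitInterval => (u z.2 + z.1, u z.2)) := by fun_prop
      simpa using this.tendsto (0, s0)
    have h2 : ∀ᶠ z : E × unitInterval in nhds (0, s0), ‖v' (u s0) - v' (u z.2)‖ < ε / 2 := by
      have : Continuous (fun z : E × unitInterval => ‖v' (u s0) - v' (u z.2)‖) := by fun_prop
      exact this.continuousAt.eventually_lt continuousAt_const (by simpa using half_pos hε)
    filter_upwards [ht.eventually h1, h2] with z hz1 hz2
    simp only [add_sub_cancel_left] at hz1
    have : v (u z.2 + z.1) - v (u z.2) - v' (u z.2) z.1 =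
      (v (u z.2 + z.1) - v (u z.2) - v' (u s0) z.1) + (v' (u s0) - v' (u z.2)) z.1 := by
      simp
    rw [this]
    calc _ ≤ ε / 2 * ‖z.1‖ + ε / 2 * ‖z.1‖ := (norm_add_le _ _).trans (add_le_add hz1
            (((v' (u s0) - v' (u z.2)).le_opNorm _).trans (by gcongr)))
      _ = ε * ‖z.1‖ := by ring
  obtain ⟨δ, hδ, hk⟩ := Metric.eventually_nhds_iff.1 key
  filter_upwards [Metric.ball_mem_nhds (0 : C(unitInterval, E)) hδ] with h hh
  rw [ContinuousMap.norm_le _ (by positivity)]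
  intro s
  have hs : ‖h s‖ ≤ ‖h‖ := h.norm_coe_le_norm s
  rw [mem_ball_zero_iff] at hh
  refine (hk (y := h s) (by simpa using lt_of_le_of_lt hs hh) s trivial).trans (?_ : _ ≤ ε * ‖h‖)
  gcongr

lemma nem_contDiff {E : Type} [NormedAddCommGroup E] [NormedSpace ℝ E] (n : ℕ) :
    ∀ {F : Type} [NormedAddCommGroup F] [NormedSpace ℝ F] (v : C(E, F)),
      ContDiff ℝ (⊤ : ℕ∞) v → ContDiff ℝ n (nem v) := by
  induction n with
  | zero =>
    intro F _ _ v hv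
    rw [Nat.cast_zero, contDiff_zero]
    exact ContinuousMap.continuous_postcomp v
  | succ n ih =>
    intro F _ _ v hv
    have hc : Continuous (fderiv ℝ v) := hv.continuous_fderiv (by simp)
    have hd : ∀ u, HasFDerivAt (nem v) (nemL E F (nem ⟨fderiv ℝ v, hc⟩ u)) u := fun u =>
      nem_hasFDerivAt v ⟨fderiv ℝ v, hc⟩
        (fun x => (hv.contDiffAt.hasStrictFDerivAt (by simp))) u
    rw [Nat.cast_succ, contDiff_succ_iff_hasFDerivAt]
    refine ⟨_, ?_, hd⟩
    have hL : ContDiff ℝ n (fun A => nemL E F A) := by fun_prop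
    exact hL.comp (ih (F := E →L[ℝ] F) ⟨fderiv ℝ v, hc⟩ (hv.fderiv_right (by simp)))

lemma nem_contDiff_top {E F : Type} [NormedAddCommGroup E] [NormedSpace ℝ E]
    [NormedAddCommGroup F] [NormedSpace ℝ F] (v : C(E, F))
    (hv : ContDiff ℝ (⊤ : ℕ∞) v) : ContDiff ℝ (⊤ : ℕ∞) (nem v) :=
  contDiff_infty.2 fun n => nem_contDiff n v hv

/-- integration from `0` to `s` -/
def integL (F : Type) [NormedAddCommGroup F] [NormedSpace ℝ F] :
    C(unitInterval, F) →L[ℝ] C(unitInterval, F) :=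
  LinearMap.mkContinuous
    { toFun := fun u => ⟨fun s => ∫ r in (0:ℝ)..s, u (projIcc 0 1 zero_le_one r), by
        have : Continuous fun s : ℝ => ∫ r in (0:ℝ)..s, u (projIcc 0 1 zero_le_one r) :=
          intervalIntegral.continuous_primitive (fun a b =>
            (u.continuous.comp continuous_projIcc).intervalIntegrable a b) 0
        exact this.comp continuous_subtype_val⟩
      map_add' := fun u w => by
        ext s
        exact intervalIntegral.integral_add ((u.continuous.comp continuous_projIcc).intervalIntegrable _ _)
          ((w.continuous.comp continuous_projIcc).intervalIntegrable _ _)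
      map_smul' := fun c u => by
        ext s
        simp } 1 (by
    intro u
    rw [ContinuousMap.norm_le _ (by positivity)]
    intro s
    have := intervalIntegral.norm_integral_le_of_norm_le_const (a := 0) (b := (s:ℝ)) (C := ‖u‖)
      (f := fun r => u (projIcc 0 1 zero_le_one r)) (fun r _ => u.norm_coe_le_norm _)
    refine this.trans ?_
    rw [sub_zero, abs_of_nonneg s.2.1, one_mul]
    exact mul_le_of_le_one_right (norm_nonneg _) s.2.2)

lemma integL_apply {F : Type} [NormedAddCommGroup F] [NormedSpace ℝ F]
    (u : C(unitInterval, F)) (s : unitInterval) :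
    integL F u s = ∫ r in (0:ℝ)..s, u (projIcc 0 1 zero_le_one r) := rfl

/-- parametric integrals of smooth functions are smooth -/
lemma contDiff_param_integral {E F : Type} [NormedAddCommGroup E] [NormedSpace ℝ E]
    [NormedAddCommGroup F] [NormedSpace ℝ F] (f : ℝ × E → F) (hf : ContDiff ℝ (⊤ : ℕ∞) f) :
    ContDiff ℝ (⊤ : ℕ∞) (fun p : E => ∫ r in (0:ℝ)..1, f (r, p)) := by
  have h1 : ContDiff ℝ (⊤ : ℕ∞) (nem (⟨f, hf.continuous⟩ : C(ℝ × E, F))) := nem_contDiff_top _ hf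
  let c : C(unitInterval, ℝ × E) := ⟨fun s => (s, 0), by fun_prop⟩
  let ℓ : E →L[ℝ] C(unitInterval, ℝ × E) := LinearMap.mkContinuous
    { toFun := fun p => ⟨fun _ => (0, p), by fun_prop⟩
      map_add' := fun p q => by ext <;> simp
      map_smul' := fun a p => by ext <;> simp } 1 (by
      intro p
      rw [ContinuousMap.norm_le _ (by positivity)]
      intro s
      simp [Prod.norm_def])
  have h2 : ContDiff ℝ (⊤ : ℕ∞) (fun p : E => c + ℓ p) := contDiff_const.add ℓ.contDiff
  have h3 := (integL F).contDiff.comp (h1.comp h2)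
  have h4 := ((ContinuousMap.evalCLM ℝ (1 : unitInterval) : C(unitInterval, F) →L[ℝ] F)).contDiff.comp h3
  convert h4 using 1
  funext p
  simp only [Function.comp]
  change _ = integL F _ 1
  rw [integL_apply]
  apply intervalIntegral.integral_congr
  intro r hr
  rw [uIcc_of_le zero_le_one] at hr
  simp only [nem, ContinuousMap.comp_apply, ContinuousMap.coe_mk, ContinuousMap.add_apply]
  simp [c, ℓ, projIcc_of_mem zero_le_one hr]


def constL2 : E2 →L[ℝ] C(unitInterval, E2) := LinearMap.mkContinuous
    { toFun := fun p => ⟨fun _ => p, by fun_prop⟩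
      map_add' := fun p q => by ext; simp
      map_smul' := fun a p => by ext; simp } 1 (by
      intro p
      rw [ContinuousMap.norm_le _ (by positivity)]
      intro s
      simp)

lemma IsFlow.contDiffAt_zero {v : E2 → E2} {φ : ℝ → E2 → E2} (h : IsFlow v φ) {K : NNReal}
    (hv : LipschitzWith K v) (hvs : ContDiff ℝ (⊤ : ℕ∞) v) (x0 : E2) :
    ContDiffAt ℝ (⊤ : ℕ∞) (fun p : ℝ × E2 => φ p.1 p.2) (0, x0) := by
  have hφ := h.continuous hv
  let V : C(E2, E2) := ⟨v, hvs.continuous⟩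
  let F : (ℝ × E2) × C(unitInterval, E2) → C(unitInterval, E2) := fun p =>
    p.2 - constL2 p.1.2 - p.1.1 • integL E2 (nem V p.2)
  have hF : ContDiff ℝ (⊤ : ℕ∞) F := by
    have h1 : ContDiff ℝ (⊤ : ℕ∞) (nem V) := nem_contDiff_top _ hvs
    have h2 : ContDiff ℝ (⊤ : ℕ∞) (fun p : (ℝ × E2) × C(unitInterval, E2) => integL E2 (nem V p.2)) :=
      (integL E2).contDiff.comp (h1.comp contDiff_snd)
    have h3 : ContDiff ℝ (⊤ : ℕ∞) (fun p : (ℝ × E2) × C(unitInterval, E2) => constL2 p.1.2) :=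
      constL2.contDiff.comp (contDiff_snd.comp contDiff_fst)
    exact (contDiff_snd.sub h3).sub ((contDiff_fst.comp contDiff_fst).smul h2)
  let u0 : (ℝ × E2) × C(unitInterval, E2) := ((0, x0), constL2 x0)
  have hinv : fderiv ℝ F u0 ∘L .inr ℝ (ℝ × E2) C(unitInterval, E2) =
      ContinuousLinearMap.id ℝ C(unitInterval, E2) := by
    have h1 : HasFDerivAt F (fderiv ℝ F u0) u0 := (hF.differentiable (by simp)).differentiableAt.hasFDerivAt
    have h2 : HasFDerivAt (fun u : C(unitInterval, E2) => ((0, x0), u)) (.inr ℝ (ℝ × E2) C(unitInterval, E2)) (constL2 x0) :=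
      hasFDerivAt_prodMk_right _ _
    have h3 := h1.comp (constL2 x0) h2
    have h4 : HasFDerivAt (F ∘ fun u : C(unitInterval, E2) => ((0, x0), u))
        (ContinuousLinearMap.id ℝ C(unitInterval, E2)) (constL2 x0) := by
      have : (F ∘ fun u : C(unitInterval, E2) => ((0, x0), u)) = fun u => u - constL2 x0 := by
        funext u
        simp [F]
      rw [this]
      exact (hasFDerivAt_id _).sub_const _
    exact h3.unique h4
  have hif : (fderiv ℝ F u0 ∘L .inr ℝ (ℝ × E2) C(unitInterval, E2)).IsInvertible := by
    rw [hinv]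
    exact ⟨ContinuousLinearEquiv.refl ℝ _, rfl⟩
  have hFa : ContDiffAt ℝ (⊤ : ℕ∞) F u0 := hF.contDiffAt
  have hev := hFa.eventually_apply_eq_iff_implicitFunction (by simp) hif
  have hsm := hFa.contDiffAt_implicitFunction (by simp) hif
  set ψ := hFa.implicitFunction (by simp) hif with hψ
  let cur : C(ℝ × E2, C(unitInterval, E2)) :=
    ContinuousMap.curry ⟨fun p : (ℝ × E2) × unitInterval => φ (p.1.1 * p.2) p.1.2, by
      exact hφ.comp (by fun_prop : Continuous fun p : (ℝ × E2) × unitInterval => ((p.1.1 * p.2 : ℝ), p.1.2))⟩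
  have hcur : ∀ p s, cur p s = φ (p.1 * s) p.2 := fun p s => rfl
  have hFc : ∀ p, F (p, cur p) = 0 := by
    rintro ⟨τ, x⟩
    ext1 s
    have hIntg : ∫ r in (0:ℝ)..s, τ • v (φ (τ * r) x) = φ (τ * s) x - x := by
      have := intervalIntegral.integral_eq_sub_of_hasDerivAt (a := 0) (b := (s:ℝ))
        (f := fun r => φ (τ * r) x) (f' := fun r => τ • v (φ (τ * r) x)) (fun r _ => by
          have h1 : HasDerivAt (fun r : ℝ => τ * r) τ r := by simpa using (hasDerivAt_id r).const_mul τ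
          exact (h.deriv x (τ * r)).scomp r h1)
        (by
          apply Continuous.intervalIntegrable
          exact (hvs.continuous.comp (hφ.comp (by fun_prop : Continuous fun r : ℝ => (τ * r, x)))).const_smul τ)
      simpa [h.zero] using this
    have : (∫ r in (0:ℝ)..s, v (φ (τ * (projIcc 0 1 zero_le_one r : unitInterval)) x)) =
        ∫ r in (0:ℝ)..s, v (φ (τ * r) x) := by
      apply intervalIntegral.integral_congr
      intro r hr
      rw [uIcc_of_le s.2.1] at hr
      simp only
      rw [projIcc_of_mem zero_le_one ⟨hr.1, hr.2.trans s.2.2⟩]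
    rw [intervalIntegral.integral_smul] at hIntg
    change φ (τ * s) x - x - τ • (integL E2 (nem V (cur (τ, x)))) s = 0
    rw [integL_apply]
    change φ (τ * s) x - x - τ • (∫ r in (0:ℝ)..s, v (φ (τ * (projIcc 0 1 zero_le_one r : unitInterval)) x)) = 0
    rw [this, hIntg, sub_self]
  have hc0 : cur (0, x0) = constL2 x0 := by
    ext1 s
    rw [hcur]
    simp [h.zero]
    rfl
  have ht : Filter.Tendsto (fun p => (p, cur p)) (nhds (0, x0)) (nhds u0) := by
    have : Continuous fun p => (p, cur p) := by fun_prop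
    have h2 := this.tendsto (0, x0)
    rwa [hc0] at h2
  have hF0 : F u0 = 0 := by
    have := hFc (0, x0)
    rwa [hc0] at this
  have hfin : (fun p : ℝ × E2 => φ p.1 p.2) =ᶠ[nhds (0, x0)] fun p => ψ p 1 := by
    filter_upwards [ht.eventually hev] with p hp
    rw [hp.1 (by rw [hFc, hF0]), hcur]
    simp
  refine ContDiffAt.congr_of_eventuallyEq ?_ hfin
  exact ((ContinuousMap.evalCLM ℝ (1 : unitInterval) : C(unitInterval, E2) →L[ℝ] E2)).contDiff.contDiffAt.comp
    (0, x0) hsm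

lemma IsFlow.contDiff {v : E2 → E2} {φ : ℝ → E2 → E2} (h : IsFlow v φ) {K : NNReal}
    (hv : LipschitzWith K v) (hvs : ContDiff ℝ (⊤ : ℕ∞) v) :
    ContDiff ℝ (⊤ : ℕ∞) (fun p : ℝ × E2 => φ p.1 p.2) := by
  rw [contDiff_infty]
  intro n
  rw [contDiff_iff_contDiffAt]
  rintro ⟨t, x0⟩
  have hφ := h.continuous hv
  let T : Set ℝ := {t | ContDiffAt ℝ n (fun p : ℝ × E2 => φ p.1 p.2) (t, x0)}
  have hloc : ∀ t, ∀ᶠ q : ℝ × ℝ in nhds (t, t), q.1 ∈ T → q.2 ∈ T := by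
    intro t
    have h1 := ((h.contDiffAt_zero hv hvs (φ t x0)).of_le (m := n) (by exact_mod_cast le_top)).eventually (by simp)
    have ht : Filter.Tendsto (fun q : ℝ × ℝ => (q.2 - q.1, φ q.1 x0)) (nhds (t, t))
        (nhds (0, φ t x0)) := by
      have : Continuous fun q : ℝ × ℝ => (q.2 - q.1, φ q.1 x0) :=
        (continuous_snd.sub continuous_fst).prodMk (hφ.comp (continuous_fst.prodMk continuous_const))
      simpa using this.tendsto (t, t)
    filter_upwards [ht.eventually h1] with q hq hq1
    have e : (fun p : ℝ × E2 => φ p.1 p.2) = (fun p : ℝ × E2 => φ p.1 p.2) ∘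
        (fun p : ℝ × E2 => (p.1 - q.1, φ q.1 p.2)) := by
      funext p
      simp [← h.add hv]
    change ContDiffAt ℝ n _ _
    rw [e]
    refine ContDiffAt.comp (q.2, x0) hq ?_
    refine (contDiffAt_fst.sub contDiffAt_const).prodMk ?_
    have hq1' : ContDiffAt ℝ n (fun p : ℝ × E2 => φ p.1 p.2) ((fun p : ℝ × E2 => (q.1, p.2)) (q.2, x0)) := hq1
    have hc : ContDiffAt ℝ n (fun p : ℝ × E2 => (q.1, p.2)) (q.2, x0) :=
      contDiffAt_const.prodMk contDiffAt_snd
    exact ContDiffAt.comp (g := fun p : ℝ × E2 => φ p.1 p.2) (q.2, x0) hq1' hc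
  have hcl : IsClopen T := by
    constructor
    · rw [← isOpen_compl_iff, isOpen_iff_mem_nhds]
      intro t ht
      have := hloc t
      rw [nhds_prod_eq] at this
      have := this.curry.self_of_nhds
      have h2 := (Filter.Eventually.curry (Filter.eventually_swap_iff.1 (by simpa [nhds_prod_eq] using hloc t))).self_of_nhds
      filter_upwards [h2] with s hs hsT
      exact ht (hs hsT)
    · rw [isOpen_iff_mem_nhds]
      intro t ht
      have := hloc t
      rw [nhds_prod_eq] at this
      filter_upwards [this.curry.self_of_nhds] with s hs
      exact hs ht
  have : T = univ := hcl.eq_univ ⟨0, by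
    change ContDiffAt ℝ n _ _
    exact (h.contDiffAt_zero hv hvs x0).of_le (by exact_mod_cast le_top)⟩
  exact (this ▸ mem_univ t : t ∈ T)


def XX (ω : E2 → ℝ) (x : E2) : E2 := !₂[-pd 1 ω x, pd 0 ω x]
def NN (ω : E2 → ℝ) (x : E2) : E2 := !₂[pd 0 ω x, pd 1 ω x]

lemma fderiv_eq_pd (f : E2 → ℝ) (x v : E2) : fderiv ℝ f x v = v 0 * pd 0 f x + v 1 * pd 1 f x := by
  have : v = v 0 • EuclideanSpace.single 0 (1:ℝ) + v 1 • EuclideanSpace.single 1 (1:ℝ) := by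
    ext i; fin_cases i <;> simp
  conv_lhs => rw [this]
  rw [map_add, map_smul, map_smul]
  rfl

lemma fderiv_XX (ω α : E2 → ℝ) (x : E2) : fderiv ℝ α x (XX ω x) = pb ω α x := by
  rw [fderiv_eq_pd]; simp [XX, pb]; ring

lemma fderiv_XX_self (ω : E2 → ℝ) (x : E2) : fderiv ℝ ω x (XX ω x) = 0 := by
  rw [fderiv_eq_pd]; simp [XX]; ring

lemma fderiv_NN (ω : E2 → ℝ) (x : E2) : fderiv ℝ ω x (NN ω x) = pd 0 ω x ^ 2 + pd 1 ω x ^ 2 := by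
  rw [fderiv_eq_pd]; simp [NN]; ring

lemma gradient_eq_NN (ω : E2 → ℝ) (x : E2) : gradient ω x = NN ω x := by
  apply (InnerProductSpace.toDual ℝ E2).injective
  rw [gradient, LinearIsometryEquiv.apply_symm_apply]
  ext v
  rw [fderiv_eq_pd]
  simp [NN, InnerProductSpace.toDual_apply_apply, PiLp.inner_apply, Fin.sum_univ_two]

lemma norm_gradient_sq (ω : E2 → ℝ) (x : E2) : ‖gradient ω x‖ ^ 2 = pd 0 ω x ^ 2 + pd 1 ω x ^ 2 := by
  rw [gradient_eq_NN, EuclideanSpace.norm_sq_eq]; simp [NN]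

lemma norm_XX (ω : E2 → ℝ) (x : E2) : ‖XX ω x‖ = ‖gradient ω x‖ := by
  have : ‖XX ω x‖ ^ 2 = ‖gradient ω x‖ ^ 2 := by
    rw [norm_gradient_sq, EuclideanSpace.norm_sq_eq]; simp [XX]; ring
  exact (pow_left_inj₀ (norm_nonneg _) (norm_nonneg _) two_ne_zero).1 this

lemma contDiff_pd {ω : E2 → ℝ} (hω : ContDiff ℝ (⊤ : ℕ∞) ω) (i : Fin 2) : ContDiff ℝ (⊤ : ℕ∞) (pd i ω) :=
  (hω.fderiv_right (m := (⊤ : ℕ∞)) (by simp)).clm_apply contDiff_const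

lemma contDiff_E2 {E : Type} [NormedAddCommGroup E] [NormedSpace ℝ E] {n : WithTop ℕ∞} {f g : E → ℝ} (hf : ContDiff ℝ n f)
    (hg : ContDiff ℝ n g) : ContDiff ℝ n (fun x => (!₂[f x, g x] : E2)) := by
  rw [contDiff_euclidean]
  intro i; fin_cases i
  · simpa using hf
  · simpa using hg

lemma contDiff_XX {ω : E2 → ℝ} (hω : ContDiff ℝ (⊤ : ℕ∞) ω) : ContDiff ℝ (⊤ : ℕ∞) (XX ω) :=
  contDiff_E2 (contDiff_pd hω 1).neg (contDiff_pd hω 0)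

lemma contDiff_NN {ω : E2 → ℝ} (hω : ContDiff ℝ (⊤ : ℕ∞) ω) : ContDiff ℝ (⊤ : ℕ∞) (NN ω) :=
  contDiff_E2 (contDiff_pd hω 0) (contDiff_pd hω 1)

/-- the two flows -/
structure Flows (Ω : Set E2) (ω : E2 → ℝ) (V : Set E2) (φ η : ℝ → E2 → E2) : Prop where
  openV : IsOpen V
  subV : closure Ω ⊆ V
  crit : ∀ x ∈ V, 0 < pd 0 ω x ^ 2 + pd 1 ω x ^ 2
  sφ : ContDiff ℝ (⊤ : ℕ∞) (fun p : ℝ × E2 => φ p.1 p.2)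
  sη : ContDiff ℝ (⊤ : ℕ∞) (fun p : ℝ × E2 => η p.1 p.2)
  φ0 : ∀ x, φ 0 x = x
  η0 : ∀ x, η 0 x = x
  φadd : ∀ s t x, φ (s + t) x = φ s (φ t x)
  ηadd : ∀ s t x, η (s + t) x = η s (η t x)
  φd : ∀ x t, φ t x ∈ V → HasDerivAt (fun t => φ t x) (XX ω (φ t x)) t
  ηd : ∀ x t, η t x ∈ V → HasDerivAt (fun t => η t x)
    ((pd 0 ω (η t x) ^ 2 + pd 1 ω (η t x) ^ 2)⁻¹ • NN ω (η t x)) t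
  ωφ : ∀ x t, ω (φ t x) = ω x

lemma exists_flows (Ω : Set E2) (hΩc : IsCompact (closure Ω)) (ω : E2 → ℝ) (hω : ContDiff ℝ (⊤ : ℕ∞) ω)
    (hcrit : ∀ x ∈ closure Ω, gradient ω x ≠ 0) : ∃ V φ η, Flows Ω ω V φ η := by
  let q : E2 → ℝ := fun x => pd 0 ω x ^ 2 + pd 1 ω x ^ 2
  have hq : ContDiff ℝ (⊤ : ℕ∞) q := ((contDiff_pd hω 0).pow 2).add ((contDiff_pd hω 1).pow 2)
  have hq0 : ∀ x, 0 ≤ q x := fun x => by positivity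
  let U : Set E2 := {x | 0 < q x}
  have hU : IsOpen U := isOpen_lt continuous_const hq.continuous
  have hKU : closure Ω ⊆ U := fun x hx => by
    change 0 < pd 0 ω x ^ 2 + pd 1 ω x ^ 2
    rw [← norm_gradient_sq]
    have := norm_pos_iff.2 (hcrit x hx)
    positivity
  obtain ⟨β, hβ, hβc, hβU, V, hV, hKV, hβ1⟩ := exists_cutoff hΩc hU hKU
  have hVU : V ⊆ U := fun x hx => hβU (subset_tsupport _ (by simp [hβ1 x hx]))
  let v1 : E2 → E2 := fun x => β x • XX ω x
  let v2 : E2 → E2 := fun x => β x • ((q x)⁻¹ • NN ω x)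
  have hv1 : ContDiff ℝ (⊤ : ℕ∞) v1 := hβ.smul (contDiff_XX hω)
  have hv2 : ContDiff ℝ (⊤ : ℕ∞) v2 := by
    rw [contDiff_iff_contDiffAt]
    intro x
    by_cases hx : x ∈ tsupport β
    · have hne : q x ≠ 0 := (hβU hx).ne'
      exact hβ.contDiffAt.smul ((hq.contDiffAt.inv hne).smul (contDiff_NN hω).contDiffAt)
    · have : v2 =ᶠ[nhds x] fun _ => 0 := by
        filter_upwards [(isClosed_tsupport β).isOpen_compl.mem_nhds hx] with y hy
        simp [v2, image_eq_zero_of_notMem_tsupport hy]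
      exact contDiffAt_const.congr_of_eventuallyEq this
  have hs1 : HasCompactSupport v1 := hβc.smul_right
  have hs2 : HasCompactSupport v2 := hβc.smul_right
  obtain ⟨K1, hK1⟩ := hv1.lipschitzWith_of_hasCompactSupport hs1 (by simp)
  obtain ⟨K2, hK2⟩ := hv2.lipschitzWith_of_hasCompactSupport hs2 (by simp)
  obtain ⟨L1, hL1⟩ := hs1.exists_bound_of_continuous hv1.continuous
  obtain ⟨L2, hL2⟩ := hs2.exists_bound_of_continuous hv2.continuous
  obtain ⟨φ, hφ⟩ := exists_flow v1 K1 L1.toNNReal hK1 (fun x => (hL1 x).trans (Real.le_coe_toNNReal _))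
  obtain ⟨η, hη⟩ := exists_flow v2 K2 L2.toNNReal hK2 (fun x => (hL2 x).trans (Real.le_coe_toNNReal _))
  refine ⟨V, φ, η, hV, hKV, fun x hx => hVU hx, hφ.contDiff hK1 hv1, hη.contDiff hK2 hv2, hφ.zero, hη.zero,
    hφ.add hK1, hη.add hK2, ?_, ?_, ?_⟩
  · intro x t h
    have := hφ.deriv x t
    simp only [v1, hβ1 _ h, one_smul] at this
    exact this
  · intro x t h
    have := hη.deriv x t
    simp only [v2, hβ1 _ h, one_smul] at this
    exact this
  · intro x t
    have hd : ∀ t, HasDerivAt (fun t => ω (φ t x)) 0 t := fun t => by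
      have h1 : HasFDerivAt ω (fderiv ℝ ω (φ t x)) (φ t x) :=
        (hω.differentiable (by simp)).differentiableAt.hasFDerivAt
      have := h1.comp_hasDerivAt t (hφ.deriv x t)
      simp only [v1, map_smul, fderiv_XX_self, smul_zero] at this
      exact this
    have := is_const_of_deriv_eq_zero (fun t => (hd t).differentiableAt) (fun t => (hd t).deriv) t 0
    simpa [hφ.zero] using this


section
variable {Ω : Set E2} {ω : E2 → ℝ} {a b : ℝ} {V : Set E2} {φ η : ℝ → E2 → E2}

lemma Flows.cφ (h : Flows Ω ω V φ η) (x : E2) : Continuous fun t => φ t x :=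
  h.sφ.continuous.comp (continuous_id.prodMk continuous_const)
lemma Flows.cη (h : Flows Ω ω V φ η) (x : E2) : Continuous fun t => η t x :=
  h.sη.continuous.comp (continuous_id.prodMk continuous_const)

lemma Flows.ωη_deriv (h : Flows Ω ω V φ η) (hω : ContDiff ℝ (⊤ : ℕ∞) ω) (x : E2) (t : ℝ)
    (hV : η t x ∈ V) : HasDerivAt (fun t => ω (η t x)) 1 t := by
  have h1 : HasFDerivAt ω (fderiv ℝ ω (η t x)) (η t x) :=
    (hω.differentiable (by simp)).differentiableAt.hasFDerivAt
  have := h1.comp_hasDerivAt t (h.ηd x t hV)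
  rw [map_smul, fderiv_NN, smul_eq_mul, inv_mul_cancel₀ (h.crit _ hV).ne'] at this
  exact this

/-- the orbit of φ stays in the annulus -/
lemma Flows.stayφ (h : Flows Ω ω V φ η) (hA : AnnData Ω ω a b) {x : E2} (hx : x ∈ closure Ω)
    (hxo : ω x ∈ Ioo a b) (t : ℝ) : φ t x ∈ closure Ω := by
  let T : Set ℝ := {t | φ t x ∈ closure Ω}
  have hT : T = {t | φ t x ∈ interior (closure Ω)} := by
    ext t
    exact ⟨fun ht => hA.int _ ht (by rw [h.ωφ]; exact hxo), fun ht => (interior_subset (s := closure Ω) ht : φ t x ∈ closure Ω)⟩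
  have hcl : IsClopen T := ⟨isClosed_closure.preimage (h.cφ x), by
    rw [hT]; exact isOpen_interior.preimage (h.cφ x)⟩
  have : T = univ := hcl.eq_univ ⟨0, by change φ 0 x ∈ closure Ω; rwa [h.φ0]⟩
  exact (this ▸ mem_univ t : t ∈ T)

lemma Flows.stayη (h : Flows Ω ω V φ η) (hω : ContDiff ℝ (⊤ : ℕ∞) ω)
    (hA : AnnData Ω ω a b) {x : E2} (hx : x ∈ closure Ω)
    (hxo : ω x ∈ Ioo a b) (t : ℝ) (ht : ω x + t ∈ Ioo a b) : η t x ∈ closure Ω ∧ ω (η t x) = ω x + t := by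
  let J : Set ℝ := Ioo (a - ω x) (b - ω x)
  have hJ : IsPreconnected J := isPreconnected_Ioo
  let T : Set ℝ := {t | t ∈ J ∧ η t x ∈ interior (closure Ω) ∧ ω (η t x) = ω x + t}
  have hop : IsOpen T := by
    rw [Metric.isOpen_iff]
    rintro t ⟨h1, h2, h3⟩
    have hO : IsOpen (J ∩ (fun t => η t x) ⁻¹' interior (closure Ω)) :=
      isOpen_Ioo.inter (isOpen_interior.preimage (h.cη x))
    obtain ⟨ε, hε, hb⟩ := Metric.isOpen_iff.1 hO t ⟨h1, h2⟩
    refine ⟨ε, hε, fun s hs => ⟨(hb hs).1, (hb hs).2, ?_⟩⟩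
    have hd : ∀ r ∈ Metric.ball t ε, HasDerivWithinAt (fun t => ω (η t x) - t) 0 (Metric.ball t ε) r := by
      intro r hr
      have := (h.ωη_deriv hω x r (h.subV (interior_subset (hb hr).2))).sub (hasDerivAt_id r)
      rw [sub_self] at this
      exact this.hasDerivWithinAt
    have := (convex_ball t ε).norm_image_sub_le_of_norm_hasDerivWithin_le (C := 0) hd (by simp)
      (Metric.mem_ball_self hε) hs
    rw [zero_mul, norm_le_zero_iff] at this
    linarith
  have hcon : J ⊆ T := by
    refine hJ.subset_of_closure_inter_subset hop ⟨0, ?_, ?_, ?_, ?_⟩ ?_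
    · exact ⟨by linarith [hxo.1], by linarith [hxo.2]⟩
    · exact ⟨by linarith [hxo.1], by linarith [hxo.2]⟩
    · rw [h.η0]; exact hA.int _ hx hxo
    · rw [h.η0, add_zero]
    · rintro s ⟨hs1, hs2⟩
      have hclosed : IsClosed {t | η t x ∈ closure Ω ∧ ω (η t x) = ω x + t} :=
        (isClosed_closure.preimage (h.cη x)).inter
          (isClosed_eq (hω.continuous.comp (h.cη x)) (by fun_prop))
      have hs3 : s ∈ {t | η t x ∈ closure Ω ∧ ω (η t x) = ω x + t} :=
        closure_minimal (fun t (ht : t ∈ T) => (⟨interior_subset ht.2.1, ht.2.2⟩ :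
          η t x ∈ closure Ω ∧ ω (η t x) = ω x + t)) hclosed hs1
      refine ⟨hs2, hA.int _ hs3.1 ?_, hs3.2⟩
      rw [hs3.2]
      exact ⟨by linarith [hs2.1], by linarith [hs2.2]⟩
  have := hcon (show t ∈ J from ⟨by linarith [ht.1], by linarith [ht.2]⟩)
  exact ⟨interior_subset this.2.1, this.2.2⟩

lemma Flows.levelConn (h : Flows Ω ω V φ η) (hω : ContDiff ℝ (⊤ : ℕ∞) ω)
    (hA : AnnData Ω ω a b) {l : ℝ} (hl : l ∈ Ioo a b) : IsPreconnected {x ∈ closure Ω | ω x = l} := by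
  have : {x ∈ closure Ω | ω x = l} = (fun x => η (l - ω x) x) '' interior (closure Ω) := by
    ext x
    constructor
    · rintro ⟨h1, h2⟩
      exact ⟨x, hA.int _ h1 (h2 ▸ hl), by simp [h2, h.η0]⟩
    · rintro ⟨y, hy, rfl⟩
      have := h.stayη hω hA (interior_subset hy) (hA.int' _ hy) (l - ω y) (by simpa using hl)
      exact ⟨this.1, by rw [this.2]; ring⟩
  rw [this]
  apply hA.conI.isPreconnected.image
  exact (h.sη.continuous.comp ((continuous_const.sub hω.continuous).prodMk continuous_id)).continuousOn

/-- local transitivity on level curves -/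
lemma Flows.local_trans (h : Flows Ω ω V φ η) (hω : ContDiff ℝ (⊤ : ℕ∞) ω)
    (hA : AnnData Ω ω a b) {l : ℝ} (hl : l ∈ Ioo a b) {p : E2} (hp : p ∈ closure Ω) (hpl : ω p = l)
    {ε : ℝ} (hε : 0 < ε) : ∀ᶠ x in nhds p, ω x = l → ∃ t, |t| < ε ∧ φ t p = x := by
  let G : ℝ × ℝ → E2 := fun z => η z.2 (φ z.1 p)
  have hG : ContDiff ℝ (⊤ : ℕ∞) G :=
    h.sη.comp (contDiff_snd.prodMk (h.sφ.comp (contDiff_fst.prodMk contDiff_const)))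
  have hst : HasStrictFDerivAt G (fderiv ℝ G (0,0)) (0,0) := hG.contDiffAt.hasStrictFDerivAt (by simp)
  have hG0 : G (0,0) = p := by simp [G, h.φ0, h.η0]
  have h1 : fderiv ℝ G (0,0) (1,0) = XX ω p := by
    have e1 : HasDerivAt (fun t : ℝ => ((t, 0) : ℝ × ℝ)) (1, 0) 0 :=
      (hasDerivAt_id (0:ℝ)).prodMk (hasDerivAt_const _ _)
    have e2 := HasFDerivAt.comp_hasDerivAt (f := fun t : ℝ => ((t, 0) : ℝ × ℝ)) (0:ℝ) hst.hasFDerivAt e1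
    have e3 : HasDerivAt (fun t => φ t p) (XX ω p) 0 := by
      have := h.φd p 0 (by rw [h.φ0]; exact h.subV hp)
      rwa [h.φ0] at this
    have e4 : (G ∘ fun t : ℝ => ((t, 0) : ℝ × ℝ)) = fun t => φ t p := by
      funext t; simp [G, h.η0]
    rw [e4] at e2
    exact e2.unique e3
  have h2 : fderiv ℝ G (0,0) (0,1) = (pd 0 ω p ^ 2 + pd 1 ω p ^ 2)⁻¹ • NN ω p := by
    have e1 : HasDerivAt (fun t : ℝ => ((0, t) : ℝ × ℝ)) (0, 1) 0 :=
      (hasDerivAt_const _ _).prodMk (hasDerivAt_id (0:ℝ))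
    have e2 := HasFDerivAt.comp_hasDerivAt (f := fun t : ℝ => ((0, t) : ℝ × ℝ)) (0:ℝ) hst.hasFDerivAt e1
    have e3 := h.ηd p 0 (by rw [h.η0]; exact h.subV hp)
    rw [h.η0] at e3
    have e4 : (G ∘ fun t : ℝ => ((0, t) : ℝ × ℝ)) = fun t => η t p := by
      funext t; simp [G, h.φ0]
    rw [e4] at e2
    exact e2.unique e3
  have hsurj : (fderiv ℝ G (0,0)).range = ⊤ := by
    rw [LinearMap.range_eq_top]
    intro w
    have hq := (h.crit p (h.subV hp)).ne'
    set q := pd 0 ω p ^ 2 + pd 1 ω p ^ 2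
    refine ⟨(q⁻¹ * (- w 0 * pd 1 ω p + w 1 * pd 0 ω p)) • (1,0) +
      (w 0 * pd 0 ω p + w 1 * pd 1 ω p) • (0,1), ?_⟩
    simp only [ContinuousLinearMap.coe_coe]
    rw [map_add, map_smul, map_smul, h1, h2]
    ext i
    fin_cases i
    · simp [XX, NN]; field_simp; simp only [q]; ring
    · simp [XX, NN]; field_simp; simp only [q]; ring
  have hmap := hst.map_nhds_eq_of_surj hsurj
  rw [hG0] at hmap
  have hnb : {z : ℝ × ℝ | |z.1| < ε ∧ l + z.2 ∈ Ioo a b} ∈ nhds ((0, 0) : ℝ × ℝ) := by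
    apply IsOpen.mem_nhds
    · have o1 : IsOpen {z : ℝ × ℝ | |z.1| < ε} := isOpen_lt (by fun_prop) continuous_const
      have o2 : IsOpen {z : ℝ × ℝ | l + z.2 ∈ Ioo a b} :=
        isOpen_Ioo.preimage (by fun_prop : Continuous fun z : ℝ × ℝ => l + z.2)
      exact o1.inter o2
    · simpa using ⟨hε, hl⟩
  have := Filter.image_mem_map (m := G) hnb
  rw [hmap] at this
  filter_upwards [this] with x hx hxl
  obtain ⟨⟨t, s⟩, ⟨ht, hs⟩, rfl⟩ := hx
  have hk := h.stayφ hA hp (hpl ▸ hl) t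
  have hw : ω (φ t p) = l := by rw [h.ωφ, hpl]
  have := h.stayη hω hA hk (hw ▸ hl) s (hw ▸ hs)
  have hs0 : s = 0 := by
    have h3 := this.2
    change ω (η s (φ t p)) = l at hxl
    rw [hxl, hw] at h3
    linarith
  exact ⟨t, ht, by simp [G, hs0, h.η0]⟩
end


section
variable {Ω : Set E2} {ω : E2 → ℝ} {a b : ℝ} {V : Set E2} {φ η : ℝ → E2 → E2}

lemma XX_ne_zero (h : Flows Ω ω V φ η) {x : E2} (hx : x ∈ V) : XX ω x ≠ 0 := by
  intro h0
  have h1 := h.crit x hx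
  have h2 : (XX ω x) 0 = 0 := by rw [h0]; rfl
  have h3 : (XX ω x) 1 = 0 := by rw [h0]; rfl
  simp [XX] at h2 h3
  rw [h2, h3] at h1
  simp at h1

lemma Flows.orbit (h : Flows Ω ω V φ η) (hΩc : IsCompact (closure Ω)) (hω : ContDiff ℝ (⊤ : ℕ∞) ω)
    (hA : AnnData Ω ω a b) {l : ℝ} (hl : l ∈ Ioo a b) :
    ∃ x0 ∈ closure Ω, ω x0 = l ∧ ∃ P > 0, (∀ t, φ (t + P) x0 = φ t x0) ∧
      (∀ s ∈ Ico 0 P, ∀ t ∈ Ico 0 P, φ s x0 = φ t x0 → s = t) ∧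
      (∀ x ∈ closure Ω, ω x = l → ∃ t ∈ Ico 0 P, φ t x0 = x) := by
  obtain ⟨x0, hx0, hxl⟩ := hA.surj l (Ioo_subset_Icc_self hl)
  refine ⟨x0, hx0, hxl, ?_⟩
  have htr : ∀ x ∈ closure Ω, ω x = l → ∃ t, φ t x0 = x := by
    let L : Set E2 := {x ∈ closure Ω | ω x = l}
    have hL : IsPreconnected L := h.levelConn hω hA hl
    have : PreconnectedSpace L := isPreconnected_iff_preconnectedSpace.1 hL
    let T : Set L := {x : L | ∃ t, φ t x0 = x}
    have hloc : ∀ p : L, ∀ᶠ x : L in nhds p, ∃ t, φ t p = x := by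
      intro p
      have h1 := h.local_trans hω hA hl p.2.1 p.2.2 one_pos
      filter_upwards [continuous_subtype_val.continuousAt.eventually h1] with x hx
      obtain ⟨t, -, ht⟩ := hx x.2.2
      exact ⟨t, ht⟩
    have hcl : IsClopen T := by
      constructor
      · rw [← isOpen_compl_iff, isOpen_iff_mem_nhds]
        intro p hp
        filter_upwards [hloc p] with x hx
        rintro ⟨s, hs⟩
        obtain ⟨t, ht⟩ := hx
        refine hp ⟨-t + s, ?_⟩
        rw [h.φadd, hs, ← ht, ← h.φadd, neg_add_cancel, h.φ0]
      · rw [isOpen_iff_mem_nhds]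
        rintro p ⟨s, hs⟩
        filter_upwards [hloc p] with x hx
        obtain ⟨t, ht⟩ := hx
        refine ⟨t + s, ?_⟩
        rw [h.φadd, hs, ht]
    have hT : T = univ := hcl.eq_univ ⟨⟨x0, hx0, hxl⟩, 0, h.φ0 x0⟩
    intro x hx1 hx2
    have : (⟨x, hx1, hx2⟩ : L) ∈ T := hT ▸ mem_univ _
    exact this
  -- the group of periods
  let H : AddSubgroup ℝ :=
    { carrier := {t | φ t x0 = x0}
      zero_mem' := h.φ0 x0
      add_mem' := fun {s t} hs ht => by
        change φ (s + t) x0 = x0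
        rw [h.φadd, show φ t x0 = x0 from ht, show φ s x0 = x0 from hs]
      neg_mem' := fun {s} hs => by
        change φ (-s) x0 = x0
        conv_lhs => rw [← show φ s x0 = x0 from hs]
        rw [← h.φadd, neg_add_cancel, h.φ0] }
  have hH : ∀ t, t ∈ H ↔ φ t x0 = x0 := fun t => Iff.rfl
  have hiff : ∀ s t, φ s x0 = φ t x0 ↔ s - t ∈ H := by
    intro s t
    rw [hH]
    constructor
    · intro e
      rw [sub_eq_neg_add, h.φadd, e, ← h.φadd, neg_add_cancel, h.φ0]
    · intro e
      conv_rhs => rw [← e]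
      rw [← h.φadd, add_sub_cancel]
  obtain ⟨ε, hε, hdis⟩ : ∃ ε > 0, Disjoint (H : Set ℝ) (Ioo 0 ε) := by
    have hd := h.φd x0 0 (by rw [h.φ0]; exact h.subV hx0)
    have hne : XX ω (φ 0 x0) ≠ 0 := XX_ne_zero h (by rw [h.φ0]; exact h.subV hx0)
    have := hd.eventually_ne (c := x0) hne
    rw [eventually_nhdsWithin_iff] at this
    obtain ⟨ε, hε, hb⟩ := Metric.eventually_nhds_iff.1 this
    refine ⟨ε, hε, Set.disjoint_left.2 fun t ht1 ht2 => ?_⟩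
    exact hb (y := t) (by rw [Real.dist_eq, sub_zero, abs_of_pos ht2.1]; exact ht2.2) ht2.1.ne' ht1
  obtain ⟨T, hT0, hT⟩ : ∃ t, t ≠ 0 ∧ t ∈ H := by
    have hmem : ∀ n : ℕ, φ n x0 ∈ closure Ω := fun n => h.stayφ hA hx0 (hxl ▸ hl) n
    obtain ⟨p, hp, ψ, hψ, hlim⟩ := hΩc.tendsto_subseq hmem
    have hpl : ω p = l := by
      have h1 : Filter.Tendsto (fun n => ω (φ (ψ n) x0)) Filter.atTop (nhds (ω p)) :=
        hω.continuous.continuousAt.tendsto.comp hlim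
      simp only [h.ωφ, hxl] at h1
      exact (tendsto_nhds_unique h1 tendsto_const_nhds)
    obtain ⟨t0, ht0⟩ := htr p hp hpl
    have h1 := hlim.eventually (h.local_trans hω hA hl hp hpl one_pos)
    have h2 : ∀ᶠ n in Filter.atTop, t0 + 1 < ψ n :=
      (tendsto_natCast_atTop_atTop.comp hψ.tendsto_atTop).eventually_gt_atTop (t0 + 1)
    obtain ⟨n, hn1, hn2⟩ := (h1.and h2).exists
    obtain ⟨t, ht, he⟩ := hn1 (by simp [h.ωφ, hxl])
    refine ⟨ψ n - (t + t0), ?_, (hiff _ _).1 ?_⟩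
    · have := (abs_lt.1 ht).2
      have : t + t0 < ψ n := by linarith
      linarith
    · rw [h.φadd, ht0]
      exact he.symm
  obtain ⟨c, hc⟩ := AddSubgroup.cyclic_of_isolated_zero hε hdis
  have hmemc : ∀ t, t ∈ H ↔ ∃ n : ℤ, n • c = t := fun t => by
    rw [hc, AddSubgroup.mem_closure_singleton]
  have hc0 : c ≠ 0 := by
    rintro rfl
    obtain ⟨n, hn⟩ := (hmemc T).1 hT
    simp at hn
    exact hT0 hn.symm
  have hP : 0 < |c| := abs_pos.2 hc0
  have hcH : |c| ∈ H := by
    rcases abs_choice c with e | e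
    · rw [e]; exact (hmemc c).2 ⟨1, by simp⟩
    · rw [e]; exact (hmemc _).2 ⟨-1, by simp⟩
  refine ⟨|c|, hP, fun t => (hiff _ _).2 (by simpa using hcH), ?_, ?_⟩
  · intro s hs t ht e
    obtain ⟨n, hn⟩ := (hmemc _).1 ((hiff _ _).1 e)
    have h1 : |s - t| < |c| := by
      rw [abs_lt]; constructor <;> linarith [hs.1, hs.2, ht.1, ht.2]
    rw [← hn, zsmul_eq_mul, abs_mul] at h1
    have h2 : |(n:ℝ)| < 1 := by
      by_contra hcon
      push Not at hcon
      nlinarith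
    have h3 : n = 0 := by
      have : |n| < 1 := by exact_mod_cast h2
      exact Int.abs_lt_one_iff.1 this
    rw [h3] at hn
    simp at hn
    linarith
  · intro x hx1 hx2
    obtain ⟨t, ht⟩ := htr x hx1 hx2
    refine ⟨toIcoMod hP 0 t, by simpa using toIcoMod_mem_Ico hP 0 t, ?_⟩
    rw [← ht, hiff]
    have : toIcoMod hP 0 t - t = - (toIcoDiv hP 0 t • |c|) := by
      rw [toIcoMod]; ring
    rw [this]
    exact H.neg_mem (H.zsmul_mem hcH _)
end


/-- a global chart of the annulus by `(t, y)`, with `ω (Γ t y) = y`. -/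
structure Chart (Ω : Set E2) (ω : E2 → ℝ) (a b P δ : ℝ) (Γ : ℝ → ℝ → E2) (c : ℝ → ℝ → ℝ) : Prop where
  lt : a < b
  hP : 0 < P
  hδ : 0 < δ
  range : ∀ x ∈ closure Ω, ω x ∈ Icc a b
  smooth : ContDiff ℝ (⊤ : ℕ∞) (fun p : ℝ × ℝ => Γ p.1 p.2)
  per : ∀ t y, Γ (t + P) y = Γ t y
  level : ∀ t, ∀ y ∈ Ioo (a - δ) (b + δ), ω (Γ t y) = y
  inj : ∀ s ∈ Ico 0 P, ∀ t ∈ Ico 0 P, ∀ y, Γ s y = Γ t y → s = t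
  maps : ∀ t, ∀ y ∈ Icc a b, Γ t y ∈ closure Ω
  cover : ∀ x ∈ closure Ω, ∃ t ∈ Ico 0 P, Γ t (ω x) = x
  crit : ∀ t, ∀ y ∈ Ioo (a - δ) (b + δ), 0 < pd 0 ω (Γ t y) ^ 2 + pd 1 ω (Γ t y) ^ 2
  cper : ∀ t y, c (t + P) y = c t y
  csmooth : ∀ t, ∀ y ∈ Ioo (a - δ) (b + δ), ContDiffAt ℝ (⊤ : ℕ∞) (fun p : ℝ × ℝ => c p.1 p.2) (t, y)
  cpos : ∀ t, ∀ y ∈ Ioo (a - δ) (b + δ), 0 < c t y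
  dt : ∀ t, ∀ y ∈ Ioo (a - δ) (b + δ), HasDerivAt (fun t => Γ t y) (c t y • XX ω (Γ t y)) t

theorem exists_chart (Ω : Set E2) (hΩo : IsOpen Ω) (hΩc : IsCompact (closure Ω)) (ω : E2 → ℝ)
    (hω : ContDiff ℝ (⊤ : ℕ∞) ω) (hcrit : ∀ x ∈ closure Ω, gradient ω x ≠ 0) (a b : ℝ)
    (hA : AnnData Ω ω a b) : ∃ P δ Γ c, Chart Ω ω a b P δ Γ c := by
  obtain ⟨V, φ, η, h⟩ := exists_flows Ω hΩc ω hω hcrit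
  set l := (a + b) / 2 with hl_def
  have hl : l ∈ Ioo a b := ⟨by linarith [hA.lt], by linarith [hA.lt]⟩
  obtain ⟨x0, hx0, hxl, P, hP, hper, hinj, hsur⟩ := h.orbit hΩc hω hA hl
  let Γ : ℝ → ℝ → E2 := fun t y => η (y - l) (φ t x0)
  have hsm : ContDiff ℝ (⊤ : ℕ∞) (fun p : ℝ × ℝ => Γ p.1 p.2) :=
    h.sη.comp ((contDiff_snd.sub contDiff_const).prodMk (h.sφ.comp (contDiff_fst.prodMk contDiff_const)))
  have hΓc : Continuous (fun p : ℝ × ℝ => Γ p.1 p.2) := hsm.continuous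
  have hcy : ∀ t, Continuous fun y => Γ t y := fun t => hΓc.comp (continuous_const.prodMk continuous_id)
  have hΓper : ∀ t y, Γ (t + P) y = Γ t y := fun t y => by simp only [Γ, hper]
  have hΓinv : ∀ t y, η (l - y) (Γ t y) = φ t x0 := fun t y => by
    simp only [Γ]; rw [← h.ηadd, sub_add_sub_cancel', sub_self, h.η0]
  have hmapso : ∀ t, ∀ y ∈ Ioo a b, Γ t y ∈ closure Ω := fun t y hy => by
    have h1 := h.stayφ hA hx0 (hxl ▸ hl) t
    have h2 : ω (φ t x0) = l := by rw [h.ωφ, hxl]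
    exact (h.stayη hω hA h1 (h2 ▸ hl) (y - l) (by rw [h2]; simpa using hy)).1
  have hmaps : ∀ t, ∀ y ∈ Icc a b, Γ t y ∈ closure Ω := fun t y hy => by
    rw [← closure_Ioo hA.lt.ne] at hy
    have : Ioo a b ⊆ (fun y => Γ t y) ⁻¹' closure Ω := fun y hy => hmapso t y hy
    exact closure_minimal this (isClosed_closure.preimage (hcy t)) hy
  obtain ⟨δ, hδ, hΓV⟩ : ∃ δ > 0, ∀ t, ∀ y ∈ Ioo (a - δ) (b + δ), Γ t y ∈ V := by
    have key : ∀ y0 ∈ Icc a b, ∃ δ > 0, ∀ t, ∀ y ∈ Ioo (y0 - δ) (y0 + δ), Γ t y ∈ V := by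
      intro y0 hy0
      have h1 : ∀ᶠ y in nhds y0, ∀ t ∈ Icc 0 P, Γ t y ∈ V := by
        apply isCompact_Icc.eventually_forall_of_forall_eventually
        intro t _
        have hc : Continuous fun z : ℝ × ℝ => Γ z.2 z.1 := hΓc.comp continuous_swap
        exact hc.continuousAt.eventually (h.openV.mem_nhds (h.subV (hmaps t y0 hy0)))
      obtain ⟨δ, hδ, hb⟩ := Metric.eventually_nhds_iff.1 h1
      refine ⟨δ, hδ, fun t y hy => ?_⟩
      have hp : Function.Periodic (fun t => Γ t y) P := fun t => hΓper t y
      obtain ⟨s, hs, e⟩ := hp.exists_mem_Ico₀ hP t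
      rw [show Γ t y = Γ s y from e]
      refine hb ?_ s (Ico_subset_Icc_self hs)
      rw [Real.dist_eq, abs_lt]
      constructor <;> linarith [hy.1, hy.2]
    obtain ⟨δ1, hδ1, h1⟩ := key a ⟨le_rfl, hA.lt.le⟩
    obtain ⟨δ2, hδ2, h2⟩ := key b ⟨hA.lt.le, le_rfl⟩
    refine ⟨min δ1 δ2, lt_min hδ1 hδ2, fun t y hy => ?_⟩
    have m1 := min_le_left δ1 δ2
    have m2 := min_le_right δ1 δ2
    rcases lt_or_ge y a with hya | hya
    · exact h1 t y ⟨by linarith [hy.1], by linarith⟩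
    · rcases le_or_gt y b with hyb | hyb
      · exact h.subV (hmaps t y ⟨hya, hyb⟩)
      · exact h2 t y ⟨by linarith, by linarith [hy.2]⟩
  set J := Ioo (a - δ) (b + δ) with hJ
  have hlJ : l ∈ J := ⟨by linarith [hl.1], by linarith [hl.2]⟩
  have hlevel : ∀ t, ∀ y ∈ J, ω (Γ t y) = y := by
    intro t y hy
    have hd : ∀ r ∈ J, HasDerivWithinAt (fun y => ω (Γ t y) - y) 0 J r := by
      intro r hr
      have e := h.ωη_deriv hω (φ t x0) (r - l) (hΓV t r hr)
      have e2 : HasDerivAt (fun y => ω (Γ t y)) 1 r := by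
        have := HasDerivAt.comp r e ((hasDerivAt_id r).sub_const l)
        rw [mul_one] at this
        exact this
      have := e2.sub (hasDerivAt_id r)
      rw [sub_self] at this
      exact this.hasDerivWithinAt
    have := (convex_Ioo (a - δ) (b + δ)).norm_image_sub_le_of_norm_hasDerivWithin_le (C := 0) hd (by simp)
      hlJ hy
    rw [zero_mul, norm_le_zero_iff] at this
    have h3 : ω (Γ t l) = l := by simp [Γ, h.η0, h.ωφ, hxl]
    linarith
  let D : ℝ × ℝ → E2 := fun p => fderiv ℝ (fun p : ℝ × ℝ => Γ p.1 p.2) p (1, 0)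
  have hD : ContDiff ℝ (⊤ : ℕ∞) D :=
    (hsm.fderiv_right (m := (⊤ : ℕ∞)) (by simp)).clm_apply contDiff_const
  have hDd : ∀ t y, HasDerivAt (fun t => Γ t y) (D (t, y)) t := fun t y => by
    have e1 : HasDerivAt (fun t : ℝ => ((t, y) : ℝ × ℝ)) (1, 0) t :=
      (hasDerivAt_id t).prodMk (hasDerivAt_const _ _)
    exact ((hsm.differentiable (by simp)).differentiableAt.hasFDerivAt).comp_hasDerivAt t e1
  have hDper : ∀ t y, D (t + P, y) = D (t, y) := fun t y => by
    have e := (hDd (t + P) y).comp_add_const t P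
    simp only [hΓper] at e
    exact e.unique (hDd t y)
  let c : ℝ → ℝ → ℝ := fun t y => (D (t, y) 0 * (- pd 1 ω (Γ t y)) + D (t, y) 1 * pd 0 ω (Γ t y)) /
    (pd 0 ω (Γ t y) ^ 2 + pd 1 ω (Γ t y) ^ 2)
  have hcsm : ∀ t, ∀ y ∈ J, ContDiffAt ℝ (⊤ : ℕ∞) (fun p : ℝ × ℝ => c p.1 p.2) (t, y) := by
    intro t y hy
    have d0 : ContDiff ℝ (⊤ : ℕ∞) fun p : ℝ × ℝ => D (p.1, p.2) 0 := contDiff_euclidean.1 hD 0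
    have d1 : ContDiff ℝ (⊤ : ℕ∞) fun p : ℝ × ℝ => D (p.1, p.2) 1 := contDiff_euclidean.1 hD 1
    have p0 : ContDiff ℝ (⊤ : ℕ∞) fun p : ℝ × ℝ => pd 0 ω (Γ p.1 p.2) := (contDiff_pd hω 0).comp hsm
    have p1 : ContDiff ℝ (⊤ : ℕ∞) fun p : ℝ × ℝ => pd 1 ω (Γ p.1 p.2) := (contDiff_pd hω 1).comp hsm
    exact ((d0.mul p1.neg).add (d1.mul p0)).contDiffAt.div ((p0.pow 2).add (p1.pow 2)).contDiffAt
      (h.crit _ (hΓV t y hy)).ne'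
  have hDc : ∀ t, ∀ y ∈ J, D (t, y) = c t y • XX ω (Γ t y) := by
    intro t y hy
    have h0 : fderiv ℝ ω (Γ t y) (D (t, y)) = 0 := by
      have e1 : HasFDerivAt ω (fderiv ℝ ω (Γ t y)) (Γ t y) :=
        (hω.differentiable (by simp)).differentiableAt.hasFDerivAt
      have e2 := e1.comp_hasDerivAt t (hDd t y)
      have e3 : (ω ∘ fun t => Γ t y) = fun _ => y := by
        funext s; exact hlevel s y hy
      rw [e3] at e2
      exact e2.unique (hasDerivAt_const _ _)
    rw [fderiv_eq_pd] at h0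
    have hq := (h.crit _ (hΓV t y hy)).ne'
    ext i
    fin_cases i
    · simp [c, XX]
      field_simp
      linear_combination pd 0 ω (Γ t y) * h0
    · simp [c, XX]
      field_simp
      linear_combination pd 1 ω (Γ t y) * h0
  have hφV : ∀ t, φ t x0 ∈ V := fun t => h.subV (h.stayφ hA hx0 (hxl ▸ hl) t)
  have hD0 : ∀ t y, D (t, y) ≠ 0 := by
    intro t y h0
    have hs : ContDiff ℝ (⊤ : ℕ∞) (fun x => η (l - y) x) := h.sη.comp (contDiff_const.prodMk contDiff_id)
    have e1 := ((hs.differentiable (by simp)).differentiableAt.hasFDerivAt (x := Γ t y)).comp_hasDerivAt t (hDd t y)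
    have e3 : ((fun x => η (l - y) x) ∘ fun t => Γ t y) = fun t => φ t x0 := by
      funext s; exact hΓinv s y
    rw [e3, h0, map_zero] at e1
    exact XX_ne_zero h (hφV t) ((h.φd x0 t (hφV t)).unique e1)
  have hc0 : ∀ t, ∀ y ∈ J, c t y ≠ 0 := fun t y hy h0 => hD0 t y (by rw [hDc t y hy, h0, zero_smul])
  have hcl : ∀ t, c t l = 1 := by
    intro t
    have e1 := (hDd t l)
    have e2 : (fun t => Γ t l) = fun t => φ t x0 := by funext s; simp [Γ, h.η0]
    rw [e2] at e1
    have e3 := (h.φd x0 t (hφV t)).unique e1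
    rw [hDc t l hlJ, show Γ t l = φ t x0 from congrFun e2 t] at e3
    have e4 : (1 - c t l) • XX ω (φ t x0) = 0 := by rw [sub_smul, one_smul, ← e3, sub_self]
    have := (smul_eq_zero.1 e4).resolve_right (XX_ne_zero h (hφV t))
    linarith
  have hcpos : ∀ t, ∀ y ∈ J, 0 < c t y := by
    intro t y hy
    by_contra hcon
    push Not at hcon
    have hcont : ContinuousOn (fun y => c t y) J := fun z hz =>
      ((hcsm t z hz).continuousAt.comp (f := fun z : ℝ => (t, z)) (x := z) (by fun_prop)).continuousWithinAt
    have := isPreconnected_Ioo.intermediate_value hy hlJ hcont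
    obtain ⟨z, hz, e⟩ := this ⟨hcon, by rw [hcl]; exact zero_le_one⟩
    exact hc0 t z hz e
  have hcover : ∀ x ∈ closure Ω, ∃ t ∈ Ico 0 P, Γ t (ω x) = x := by
    have hcl : IsClosed {x | η (l - ω x) x ∈ closure Ω ∧ ω (η (l - ω x) x) = l} := by
      have hc : Continuous fun x => η (l - ω x) x :=
        h.sη.continuous.comp ((continuous_const.sub hω.continuous).prodMk continuous_id)
      exact (isClosed_closure.preimage hc).inter (isClosed_eq (hω.continuous.comp hc) continuous_const)
    have hsub : Ω ⊆ {x | η (l - ω x) x ∈ closure Ω ∧ ω (η (l - ω x) x) = l} := by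
      intro x hx
      have hxi : x ∈ interior (closure Ω) := interior_maximal subset_closure hΩo hx
      have := h.stayη hω hA (subset_closure hx) (hA.int' x hxi) (l - ω x) (by simpa using hl)
      exact ⟨this.1, by rw [this.2]; ring⟩
    intro x hx
    have hx2 := closure_minimal hsub hcl hx
    obtain ⟨t, ht, e⟩ := hsur _ hx2.1 hx2.2
    refine ⟨t, ht, ?_⟩
    simp only [Γ]
    rw [e, ← h.ηadd, sub_add_sub_cancel', sub_self, h.η0]
  refine ⟨P, δ, Γ, c, hA.lt, hP, hδ, hA.range, hsm, hΓper, hlevel, ?_, hmaps, hcover,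
    fun t y hy => h.crit _ (hΓV t y hy), ?_, hcsm, hcpos, ?_⟩
  · intro s hs t ht y e
    apply hinj s hs t ht
    rw [← hΓinv s y, e, hΓinv]
  · intro t y
    simp only [c, hDper, hΓper]
  · intro t y hy
    rw [← hDc t y hy]
    exact hDd t y


section
variable {γ : ℝ → E2} {γ' : ℝ → E2}

lemma curve_local (hd : ∀ t, HasStrictDerivAt γ (γ' t) t) (hc : Continuous γ') (t0 ε : ℝ) (hε : 0 < ε) :
    ∃ r > 0, ∀ A ⊆ Metric.ball t0 r,  MeasurableSet A →
      μH[1] (γ '' A) ≤ (∫⁻ t in A, ENNReal.ofReal ‖γ' t‖) + ENNReal.ofReal (2 * ε) * volume A ∧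
      (∫⁻ t in A, ENNReal.ofReal ‖γ' t‖) ≤ μH[1] (γ '' A) + ENNReal.ofReal (2 * ε) * volume A := by
  set g := ‖γ' t0‖ with hg
  have h1 := Asymptotics.isLittleO_iff.1 (hd t0).isLittleO hε
  rw [nhds_prod_eq] at h1
  have h2 : ∀ᶠ t in nhds t0, |‖γ' t‖ - g| < ε := by
    have : Continuous fun t => |‖γ' t‖ - g| := by fun_prop
    exact this.continuousAt.eventually_lt continuousAt_const (by simpa [hg] using hε)
  obtain ⟨r1, hr1, hb1⟩ := Metric.eventually_nhds_iff.1 h2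
  rw [← nhds_prod_eq] at h1
  obtain ⟨r2, hr2, hb2⟩ := Metric.eventually_nhds_iff.1 h1
  refine ⟨min r1 r2, lt_min hr1 hr2, fun A hA hAm => ?_⟩
  have hA1 : ∀ t ∈ A, |‖γ' t‖ - g| < ε := fun t ht =>
    hb1 (lt_of_lt_of_le (Metric.mem_ball.1 (hA ht)) (min_le_left _ _))
  have hA2 : ∀ s ∈ A, ∀ t ∈ A, ‖γ s - γ t - (s - t) • γ' t0‖ ≤ ε * ‖s - t‖ := fun s hs t ht => by
    have := hb2 (y := (s, t)) (by
      rw [Prod.dist_eq]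
      exact max_lt (lt_of_lt_of_le (Metric.mem_ball.1 (hA hs)) (min_le_right _ _))
        (lt_of_lt_of_le (Metric.mem_ball.1 (hA ht)) (min_le_right _ _)))
    simpa using this
  have hup : μH[1] (γ '' A) ≤ ENNReal.ofReal (g + ε) * volume A := by
    have hlip : LipschitzOnWith (g + ε).toNNReal γ A := by
      apply LipschitzOnWith.of_dist_le_mul
      intro s hs t ht
      rw [dist_eq_norm, dist_eq_norm, Real.coe_toNNReal _ (by positivity)]
      have e : γ s - γ t = (γ s - γ t - (s - t) • γ' t0) + (s - t) • γ' t0 := by abel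
      rw [e]
      refine (norm_add_le _ _).trans ((add_le_add_left (hA2 s hs t ht) _).trans ?_)
      rw [norm_smul]
      linarith
    have := hlip.hausdorffMeasure_image_le (d := 1) zero_le_one
    rw [ENNReal.rpow_one, hausdorffMeasure_real] at this
    exact this
  have hlo : ENNReal.ofReal (g - ε) * volume A ≤ μH[1] (γ '' A) := by
    rcases le_or_gt (g - ε) 0 with hm | hm
    · rw [ENNReal.ofReal_of_nonpos hm, zero_mul]; exact zero_le
    · have hanti : AntilipschitzWith ((g - ε)⁻¹).toNNReal (fun t : A => γ t) := by
        apply AntilipschitzWith.of_le_mul_dist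
        rintro ⟨s, hs⟩ ⟨t, ht⟩
        rw [Real.coe_toNNReal _ (by positivity), inv_mul_eq_div, le_div_iff₀ hm, Subtype.dist_eq,
          dist_eq_norm, dist_eq_norm]
        have e : (s - t) • γ' t0 = (γ s - γ t) - (γ s - γ t - (s - t) • γ' t0) := by abel
        have h3 : ‖(s - t) • γ' t0‖ ≤ ‖γ s - γ t‖ + ε * ‖s - t‖ := by
          rw [e]
          exact (norm_sub_le _ _).trans (add_le_add_right (hA2 s hs t ht) _)
        rw [norm_smul] at h3
        simp only
        linarith
      have := hanti.le_hausdorffMeasure_image (d := 1) zero_le_one univ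
      rw [ENNReal.rpow_one] at this
      have e1 : μH[1] (univ : Set A) = volume A := by
        rw [← (isometry_subtype_coe (s := A)).hausdorffMeasure_image (Or.inl zero_le_one), hausdorffMeasure_real]
        simp
      have e2 : (fun t : A => γ t) '' univ = γ '' A := by
        rw [image_univ, image_eq_range]
      rw [e1, e2] at this
      calc ENNReal.ofReal (g - ε) * volume A
          ≤ ENNReal.ofReal (g - ε) * (((g - ε)⁻¹).toNNReal * μH[1] (γ '' A)) := by gcongr
        _ = μH[1] (γ '' A) := by
          rw [← mul_assoc]
          change ENNReal.ofReal (g - ε) * ENNReal.ofReal ((g - ε)⁻¹) * _ = _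
          rw [← ENNReal.ofReal_mul hm.le, mul_inv_cancel₀ hm.ne', ENNReal.ofReal_one, one_mul]
  have iup : (∫⁻ t in A, ENNReal.ofReal ‖γ' t‖) ≤ ENNReal.ofReal (g + ε) * volume A := by
    rw [← setLIntegral_const]
    apply setLIntegral_mono' hAm
    intro t ht
    exact ENNReal.ofReal_le_ofReal (by linarith [(abs_lt.1 (hA1 t ht)).2])
  have ilo : ENNReal.ofReal (g - ε) * volume A ≤ (∫⁻ t in A, ENNReal.ofReal ‖γ' t‖) := by
    rw [← setLIntegral_const]
    apply setLIntegral_mono' hAm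
    intro t ht
    exact ENNReal.ofReal_le_ofReal (by linarith [(abs_lt.1 (hA1 t ht)).1])
  have hmid : ENNReal.ofReal (g + ε) * volume A ≤ ENNReal.ofReal (g - ε) * volume A +
      ENNReal.ofReal (2 * ε) * volume A := by
    rw [← add_mul]
    gcongr
    rw [show g + ε = (g - ε) + 2 * ε by ring]
    exact ENNReal.ofReal_add_le
  exact ⟨hup.trans (hmid.trans (add_le_add_left ilo _)), iup.trans (hmid.trans (add_le_add_left hlo _))⟩

lemma curve_measure (hd : ∀ t, HasStrictDerivAt γ (γ' t) t) (hc : Continuous γ') {P : ℝ} (hP : 0 < P)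
    (hinj : InjOn γ (Ico 0 P)) {A : Set ℝ} (hA : A ⊆ Ico 0 P) (hAm : MeasurableSet A) :
    μH[1] (γ '' A) = ∫⁻ t in A, ENNReal.ofReal ‖γ' t‖ := by
  have hγc : Continuous γ := continuous_iff_continuousAt.2 fun t => (hd t).hasDerivAt.continuousAt
  have key : ∀ ε > 0, ∀ A ⊆ Ico 0 P, MeasurableSet A →
      μH[1] (γ '' A) ≤ (∫⁻ t in A, ENNReal.ofReal ‖γ' t‖) + ENNReal.ofReal (2 * ε) * volume A ∧
      (∫⁻ t in A, ENNReal.ofReal ‖γ' t‖) ≤ μH[1] (γ '' A) + ENNReal.ofReal (2 * ε) * volume A := by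
    intro ε hε
    obtain ⟨U, hU, hUm, h⟩ := (isCompact_Icc (a := (0:ℝ)) (b := P)).induction_on
      (p := fun U => ∃ U', U ⊆ U' ∧ MeasurableSet U' ∧ ∀ A ⊆ U', A ⊆ Ico 0 P → MeasurableSet A →
      μH[1] (γ '' A) ≤ (∫⁻ t in A, ENNReal.ofReal ‖γ' t‖) + ENNReal.ofReal (2 * ε) * volume A ∧
      (∫⁻ t in A, ENNReal.ofReal ‖γ' t‖) ≤ μH[1] (γ '' A) + ENNReal.ofReal (2 * ε) * volume A)
      ⟨∅, subset_rfl, MeasurableSet.empty, fun A hA _ _ => by rw [subset_empty_iff.1 hA]; simp⟩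
      (fun s t hst ⟨U', h1, h2⟩ => ⟨U', hst.trans h1, h2⟩)
      (by
        rintro s t ⟨U, hU, hUm, h⟩ ⟨U', hU', hUm', h'⟩
        refine ⟨U ∪ U', union_subset_union hU hU', hUm.union hUm', fun A hA hAS hAm => ?_⟩
        obtain ⟨a1, a2⟩ := h (A ∩ U) inter_subset_right (inter_subset_left.trans hAS) (hAm.inter hUm)
        obtain ⟨b1, b2⟩ := h' (A \ U) (fun x hx => (hA hx.1).resolve_left hx.2) (sdiff_subset.trans hAS) (hAm.diff hUm)
        have e1 : μH[1] (γ '' A) = μH[1] (γ '' (A ∩ U)) + μH[1] (γ '' (A \ U)) := by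
          conv_lhs => rw [← inter_union_sdiff A U, image_union]
          apply measure_union
          · rw [Set.disjoint_left]
            rintro _ ⟨x, hx, rfl⟩ ⟨y, hy, e⟩
            have := hinj (hAS hy.1) (hAS hx.1) e
            exact hy.2 (this ▸ hx.2)
          · exact (hAm.diff hUm).image_of_continuousOn_injOn hγc.continuousOn
              (hinj.mono (sdiff_subset.trans hAS))
        have e2 : (∫⁻ t in A, ENNReal.ofReal ‖γ' t‖) = (∫⁻ t in A ∩ U, ENNReal.ofReal ‖γ' t‖) +
          ∫⁻ t in A \ U, ENNReal.ofReal ‖γ' t‖ := (lintegral_inter_add_sdiff _ A hUm).symm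
        have e3 : volume A = volume (A ∩ U) + volume (A \ U) := (measure_inter_add_sdiff A hUm).symm
        rw [e1, e2, e3, mul_add]
        constructor
        · calc _ ≤ _ := add_le_add a1 b1
            _ = _ := by ac_rfl
        · calc _ ≤ _ := add_le_add a2 b2
            _ = _ := by ac_rfl)
      (by
        intro t0 _
        obtain ⟨r, hr, h⟩ := curve_local hd hc t0 ε hε
        exact ⟨Metric.ball t0 r, mem_nhdsWithin_of_mem_nhds (Metric.ball_mem_nhds _ hr),
          Metric.ball t0 r, subset_rfl, measurableSet_ball, fun A hA _ hAm => h A hA hAm⟩)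
    exact fun A hA hAm => h A (hA.trans (Ico_subset_Icc_self.trans hU)) hA hAm
  have hv : volume A ≤ ENNReal.ofReal P := by
    have := measure_mono (μ := volume) hA
    simpa using this
  have hsm : ∀ e : NNReal, 0 < e → ENNReal.ofReal (2 * (e / (2 * P))) * volume A ≤ e := by
    intro e he
    calc _ ≤ ENNReal.ofReal (2 * (e / (2 * P))) * ENNReal.ofReal P := by gcongr
      _ = e := by
        rw [← ENNReal.ofReal_mul (by positivity)]
        rw [show 2 * ((e:ℝ) / (2 * P)) * P = e by field_simp]
        simp
  apply le_antisymm
  · apply ENNReal.le_of_forall_pos_le_add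
    intro e he _
    exact (key (e / (2 * P)) (by positivity) A hA hAm).1.trans (add_le_add_right (hsm e he) _)
  · apply ENNReal.le_of_forall_pos_le_add
    intro e he _
    exact (key (e / (2 * P)) (by positivity) A hA hAm).2.trans (add_le_add_right (hsm e he) _)

theorem curve_integral (hd : ∀ t, HasStrictDerivAt γ (γ' t) t) (hc : Continuous γ') {P : ℝ} (hP : 0 < P)
    (hinj : InjOn γ (Ico 0 P)) (f : E2 → ℝ) (hf : Measurable f) :
    ∫ x in γ '' Ico 0 P, f x ∂(μH[1] : Measure E2) = ∫ t in Ico 0 P, ‖γ' t‖ * f (γ t) := by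
  have hγc : Continuous γ := continuous_iff_continuousAt.2 fun t => (hd t).hasDerivAt.continuousAt
  have hm : Measurable fun t => (‖γ' t‖₊ : NNReal) := hc.nnnorm.measurable
  have hmeas : (μH[1] : Measure E2).restrict (γ '' Ico 0 P) =
      Measure.map γ ((volume.restrict (Ico 0 P)).withDensity fun t => (‖γ' t‖₊ : NNReal)) := by
    ext B hB
    rw [Measure.map_apply hγc.measurable hB, Measure.restrict_apply hB,
      withDensity_apply _ (hγc.measurable hB), Measure.restrict_restrict (hγc.measurable hB)]
    have e : B ∩ γ '' Ico 0 P = γ '' (γ ⁻¹' B ∩ Ico 0 P) := by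
      rw [inter_comm (γ ⁻¹' B), image_inter_preimage, inter_comm]
    rw [e, curve_measure hd hc hP hinj inter_subset_right ((hγc.measurable hB).inter measurableSet_Ico)]
    apply lintegral_congr
    intro t
    rw [ofReal_norm]; rfl
  rw [hmeas, integral_map hγc.measurable.aemeasurable hf.aestronglyMeasurable,
    integral_withDensity_eq_integral_smul hm]
  rfl
end


section
variable {Ω : Set E2} {ω : E2 → ℝ} {a b P δ : ℝ} {Γ : ℝ → ℝ → E2} {c : ℝ → ℝ → ℝ}

lemma Chart.Icc_sub (h : Chart Ω ω a b P δ Γ c) {y : ℝ} (hy : y ∈ Icc a b) : y ∈ Ioo (a - δ) (b + δ) :=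
  ⟨by linarith [hy.1, h.hδ], by linarith [hy.2, h.hδ]⟩

lemma Chart.level_eq (h : Chart Ω ω a b P δ Γ c) {y : ℝ} (hy : y ∈ Icc a b) :
    {x ∈ closure Ω | ω x = y} = (fun t => Γ t y) '' Ico 0 P := by
  ext x
  constructor
  · rintro ⟨h1, rfl⟩
    obtain ⟨t, ht, e⟩ := h.cover x h1
    exact ⟨t, ht, e⟩
  · rintro ⟨t, ht, rfl⟩
    exact ⟨h.maps t y hy, h.level t y (h.Icc_sub hy)⟩

lemma Chart.smooth_t (h : Chart Ω ω a b P δ Γ c) (y : ℝ) : ContDiff ℝ (⊤ : ℕ∞) (fun t => Γ t y) :=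
  h.smooth.comp (contDiff_id.prodMk contDiff_const)

lemma Chart.Jint_eq (h : Chart Ω ω a b P δ Γ c) (hω : ContDiff ℝ (⊤ : ℕ∞) ω) {ν : E2 → ℝ}
    (hν : Continuous ν) {y : ℝ} (hy : y ∈ Icc a b) :
    Jint Ω ω (fun x => ν x / ‖gradient ω x‖) y = ∫ t in Ico 0 P, c t y * ν (Γ t y) := by
  have hy' := h.Icc_sub hy
  have hd : ∀ t, HasStrictDerivAt (fun t => Γ t y) (c t y • XX ω (Γ t y)) t := fun t =>
    (h.smooth_t y).contDiffAt.hasStrictDerivAt' (h.dt t y hy') (by simp)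
  have hc : Continuous fun t => c t y • XX ω (Γ t y) := by
    have e : (fun t => c t y • XX ω (Γ t y)) = deriv (fun t => Γ t y) := by
      funext t; exact (h.dt t y hy').deriv.symm
    rw [e]
    exact (h.smooth_t y).continuous_deriv (by simp)
  have hm : Measurable fun x => ν x / ‖gradient ω x‖ := by
    have : gradient ω = NN ω := by funext x; exact gradient_eq_NN ω x
    rw [this]
    exact hν.measurable.div (contDiff_NN hω).continuous.norm.measurable
  unfold Jint
  rw [h.level_eq hy, curve_integral hd hc h.hP (fun s hs t ht e => h.inj s hs t ht y e) _ hm]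
  apply setIntegral_congr_fun measurableSet_Ico
  intro t _
  have hne : ‖gradient ω (Γ t y)‖ ≠ 0 := by
    intro h0
    have := norm_gradient_sq ω (Γ t y)
    rw [h0] at this
    linarith [h.crit t y hy']
  simp only
  rw [norm_smul, norm_XX, Real.norm_of_nonneg (h.cpos t y hy').le]
  field_simp

lemma Chart.Jint_zero_of_pb (h : Chart Ω ω a b P δ Γ c) (hω : ContDiff ℝ (⊤ : ℕ∞) ω) {ν : E2 → ℝ}
    (hν : Continuous ν) {α : E2 → ℝ} (hα : ContDiff ℝ (⊤ : ℕ∞) α) (hpb : ∀ x ∈ closure Ω, ν x = pb ω α x)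
    {y : ℝ} (hy : y ∈ Icc a b) : Jint Ω ω (fun x => ν x / ‖gradient ω x‖) y = 0 := by
  have hy' := h.Icc_sub hy
  rw [h.Jint_eq hω hν hy]
  have hd : ∀ t, HasDerivAt (fun t => α (Γ t y)) (c t y * ν (Γ t y)) t := fun t => by
    have e1 : HasFDerivAt α (fderiv ℝ α (Γ t y)) (Γ t y) :=
      (hα.differentiable (by simp)).differentiableAt.hasFDerivAt
    have e2 := e1.comp_hasDerivAt t (h.dt t y hy')
    rw [map_smul, fderiv_XX, ← hpb _ (h.maps t y hy)] at e2
    exact e2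
  have hc : Continuous fun t => c t y * ν (Γ t y) := by
    have e : (fun t => c t y * ν (Γ t y)) = deriv (fun t => α (Γ t y)) := by
      funext t; exact (hd t).deriv.symm
    rw [e]
    exact (hα.comp (h.smooth_t y)).continuous_deriv (by simp)
  rw [integral_Ico_eq_integral_Ioc, ← intervalIntegral.integral_of_le h.hP.le,
    intervalIntegral.integral_eq_sub_of_hasDerivAt (fun t _ => hd t) (hc.intervalIntegrable _ _)]
  have := h.per 0 y
  rw [zero_add] at this
  rw [this, sub_self]

def Gu (Γ : ℝ → ℝ → E2) : ℝ × ℝ → E2 := fun p => Γ p.1 p.2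

lemma Chart.fd_one (h : Chart Ω ω a b P δ Γ c) (t : ℝ) {y : ℝ} (hy : y ∈ Ioo (a - δ) (b + δ)) :
    fderiv ℝ (Gu Γ) (t, y) (1, 0) = c t y • XX ω (Γ t y) := by
  have e1 : HasDerivAt (fun t : ℝ => ((t, y) : ℝ × ℝ)) (1, 0) t :=
    (hasDerivAt_id t).prodMk (hasDerivAt_const _ _)
  have e2 := ((h.smooth.differentiable (by simp)).differentiableAt.hasFDerivAt).comp_hasDerivAt t e1
  exact e2.unique (h.dt t y hy)

lemma Chart.fd_two (h : Chart Ω ω a b P δ Γ c) (hω : ContDiff ℝ (⊤ : ℕ∞) ω)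
    (t : ℝ) {y : ℝ} (hy : y ∈ Ioo (a - δ) (b + δ)) :
    fderiv ℝ ω (Γ t y) (fderiv ℝ (Gu Γ) (t, y) (0, 1)) = 1 := by
  have e1 : HasDerivAt (fun y : ℝ => ((t, y) : ℝ × ℝ)) (0, 1) y :=
    (hasDerivAt_const _ _).prodMk (hasDerivAt_id y)
  have e2 := ((h.smooth.differentiable (by simp)).differentiableAt.hasFDerivAt (x := (t, y))).comp_hasDerivAt y e1
  have e3 : HasFDerivAt ω (fderiv ℝ ω (Γ t y)) (Γ t y) :=
    (hω.differentiable (by simp)).differentiableAt.hasFDerivAt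
  have e4 := e3.comp_hasDerivAt y e2
  have e5 : (ω ∘ ((fun p : ℝ × ℝ => Γ p.1 p.2) ∘ fun y : ℝ => ((t, y) : ℝ × ℝ))) =ᶠ[nhds y] fun y => y := by
    filter_upwards [isOpen_Ioo.mem_nhds hy] with z hz
    exact h.level t z hz
  exact (e4.congr_of_eventuallyEq e5.symm).unique (hasDerivAt_id y)

lemma Chart.exists_equiv (h : Chart Ω ω a b P δ Γ c) (hω : ContDiff ℝ (⊤ : ℕ∞) ω)
    (t : ℝ) {y : ℝ} (hy : y ∈ Ioo (a - δ) (b + δ)) :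
    ∃ e : (ℝ × ℝ) ≃L[ℝ] E2, HasFDerivAt (Gu Γ) (e : (ℝ × ℝ) →L[ℝ] E2) (t, y) := by
  have hX : XX ω (Γ t y) ≠ 0 := by
    rw [← norm_ne_zero_iff, norm_XX]
    intro h0
    have := norm_gradient_sq ω (Γ t y)
    rw [h0] at this
    linarith [h.crit t y hy]
  have hinj : Function.Injective (fderiv ℝ (Gu Γ) (t, y)) := by
    rw [injective_iff_map_eq_zero]
    rintro ⟨s, r⟩ h0
    have e : ((s, r) : ℝ × ℝ) = s • (1, 0) + r • (0, 1) := by simp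
    rw [e, map_add, map_smul, map_smul, h.fd_one t hy] at h0
    have h1 := congrArg (fderiv ℝ ω (Γ t y)) h0
    rw [map_add, map_smul, map_smul, map_smul, fderiv_XX_self, h.fd_two hω t hy] at h1
    simp at h1
    rw [h1, zero_smul, add_zero, smul_smul] at h0
    have h2 := (smul_eq_zero.1 h0).resolve_right hX
    have h3 := (mul_eq_zero.1 h2).resolve_right (h.cpos t y hy).ne'
    rw [h3, h1]; rfl
  let e := (LinearEquiv.ofInjectiveOfFinrankEq (fderiv ℝ (Gu Γ) (t, y)).toLinearMap hinj (by simp)).toContinuousLinearEquiv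
  refine ⟨e, ?_⟩
  have : (e : (ℝ × ℝ) →L[ℝ] E2) = fderiv ℝ (Gu Γ) (t, y) := by
    exact ContinuousLinearMap.ext fun v => rfl
  rw [this]
  exact (h.smooth.differentiable (by simp)).differentiableAt.hasFDerivAt

lemma Chart.inj_per (h : Chart Ω ω a b P δ Γ c) {s t y : ℝ} (e : Γ s y = Γ t y) : ∃ n : ℤ, s = t + n * P := by
  have hp : Function.Periodic (fun t => Γ t y) P := fun t => h.per t y
  have e1 : ∀ s, Γ (toIcoMod h.hP 0 s) y = Γ s y := fun s => by
    rw [← self_sub_toIcoDiv_zsmul]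
    exact hp.sub_zsmul_eq _
  have m : ∀ s, toIcoMod h.hP 0 s ∈ Ico 0 P := fun s => by simpa using toIcoMod_mem_Ico h.hP 0 s
  have e2 := h.inj _ (m s) _ (m t) y (by rw [e1, e1, e])
  rw [← self_sub_toIcoDiv_zsmul, ← self_sub_toIcoDiv_zsmul, zsmul_eq_mul, zsmul_eq_mul] at e2
  refine ⟨toIcoDiv h.hP 0 s - toIcoDiv h.hP 0 t, ?_⟩
  push_cast
  linarith
end


lemma exists_cutoff_real {K U : Set ℝ} (hK : IsCompact K) (hU : IsOpen U) (hKU : K ⊆ U) :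
    ∃ β : ℝ → ℝ, ContDiff ℝ (⊤ : ℕ∞) β ∧ tsupport β ⊆ U ∧ ∀ x ∈ K, β x = 1 := by
  obtain ⟨K1, hK1, h1, h2⟩ := exists_compact_between hK hU hKU
  obtain ⟨f, hf1, hf0, -⟩ := exists_contMDiffMap_one_nhds_of_subset_interior
    (I := modelWithCornersSelf ℝ ℝ) (n := (⊤ : ℕ∞)) hK.isClosed h1
  have hsupp : tsupport (f : ℝ → ℝ) ⊆ K1 := by
    apply closure_minimal _ hK1.isClosed
    intro x hx
    by_contra hcon
    exact hx (hf0 x hcon)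
  exact ⟨f, f.contMDiff.contDiff, hsupp.trans h2, fun x hx => hf1.self_of_nhdsSet x hx⟩

section
variable {Ω : Set E2} {ω : E2 → ℝ} {a b P δ : ℝ} {Γ : ℝ → ℝ → E2} {c : ℝ → ℝ → ℝ}

lemma Chart.descend (h : Chart Ω ω a b P δ Γ c) (hω : ContDiff ℝ (⊤ : ℕ∞) ω)
    (hΩc : IsCompact (closure Ω)) (A : ℝ × ℝ → ℝ) (hA : ContDiff ℝ (⊤ : ℕ∞) A)
    (hAp : ∀ t y, A (t + P, y) = A (t, y)) :
    ∃ α : E2 → ℝ, ContDiff ℝ (⊤ : ℕ∞) α ∧ ∀ t, ∀ y ∈ Icc a b, α (Γ t y) = A (t, y) := by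
  classical
  let α0 : E2 → ℝ := fun x => if hx : ∃ t, Γ t (ω x) = x then A (hx.choose, ω x) else 0
  have h0 : ∀ t, ∀ y ∈ Ioo (a - δ) (b + δ), α0 (Γ t y) = A (t, y) := by
    intro t y hy
    have hw := h.level t y hy
    have hx : ∃ s, Γ s (ω (Γ t y)) = Γ t y := ⟨t, by rw [hw]⟩
    have e1 : α0 (Γ t y) = A (hx.choose, ω (Γ t y)) := dif_pos hx
    have e2 := hx.choose_spec
    rw [e1]
    generalize hx.choose = s at e2 ⊢
    rw [hw] at e2 ⊢
    obtain ⟨n, hn⟩ := h.inj_per e2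
    have hp : Function.Periodic (fun t => A (t, y)) P := fun t => hAp t y
    rw [hn, ← zsmul_eq_mul]
    exact (hp.zsmul n) t
  let U : Set E2 := {x | ∃ t, ∃ y ∈ Ioo (a - δ) (b + δ), Γ t y = x}
  have hloc : ∀ x ∈ U, U ∈ nhds x ∧ ContDiffAt ℝ (⊤ : ℕ∞) α0 x := by
    rintro x ⟨t, y, hy, rfl⟩
    obtain ⟨e, he⟩ := h.exists_equiv hω t hy
    have hs : ContDiffAt ℝ (⊤ : ℕ∞) (Gu Γ) (t, y) := h.smooth.contDiffAt
    have hn : ((⊤ : ℕ∞) : WithTop ℕ∞) ≠ 0 := by simp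
    have hst := hs.hasStrictFDerivAt' he hn
    have hg := hs.to_localInverse he hn
    set g := hs.localInverse he hn with hgdef
    have hr : ∀ᶠ x in nhds (Gu Γ (t, y)), Gu Γ (g x) = x := hst.eventually_right_inverse
    have hg0 : g (Gu Γ (t, y)) = (t, y) := hst.localInverse_apply_image
    have hJ : ∀ᶠ x in nhds (Gu Γ (t, y)), (g x).2 ∈ Ioo (a - δ) (b + δ) := by
      have hc : ContinuousAt (fun x => (g x).2) (Gu Γ (t, y)) := continuousAt_snd.comp hg.continuousAt
      apply hc
      simp only [hg0]
      exact isOpen_Ioo.mem_nhds hy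
    constructor
    · filter_upwards [hr, hJ] with x h1 h2
      exact ⟨(g x).1, (g x).2, h2, h1⟩
    · have : α0 =ᶠ[nhds (Gu Γ (t, y))] fun x => A (g x) := by
        filter_upwards [hr, hJ] with x h1 h2
        conv_lhs => rw [← h1]
        exact h0 _ _ h2
      exact (hA.contDiffAt.comp _ hg).congr_of_eventuallyEq this
  have hUo : IsOpen U := isOpen_iff_mem_nhds.2 fun x hx => (hloc x hx).1
  have hKU : closure Ω ⊆ U := fun x hx => by
    obtain ⟨t, -, e⟩ := h.cover x hx
    exact ⟨t, ω x, h.Icc_sub (h.range x hx), e⟩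
  obtain ⟨β, hβ, -, hsupp, V, -, hKV, hV⟩ := exists_cutoff hΩc hUo hKU
  refine ⟨fun x => β x * α0 x, ?_, ?_⟩
  · rw [contDiff_iff_contDiffAt]
    intro x
    by_cases hx : x ∈ U
    · exact hβ.contDiffAt.mul (hloc x hx).2
    · have hx' : x ∉ tsupport β := fun hh => hx (hsupp hh)
      have : (fun x => β x * α0 x) =ᶠ[nhds x] fun _ => 0 := by
        filter_upwards [notMem_tsupport_iff_eventuallyEq.1 hx'] with z hz
        rw [hz]; simp
      exact contDiffAt_const.congr_of_eventuallyEq this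
  · intro t y hy
    simp only
    rw [hV _ (hKV (h.maps t y hy)), one_mul, h0 t y (h.Icc_sub hy)]

lemma Chart.exists_alpha (h : Chart Ω ω a b P δ Γ c) (hω : ContDiff ℝ (⊤ : ℕ∞) ω)
    (hΩc : IsCompact (closure Ω)) {ν : E2 → ℝ} (hν : ContDiff ℝ (⊤ : ℕ∞) ν)
    (hJ : ∀ y ∈ Icc a b, Jint Ω ω (fun x => ν x / ‖gradient ω x‖) y = 0) :
    ∃ α : E2 → ℝ, ContDiff ℝ (⊤ : ℕ∞) α ∧ ∀ x ∈ closure Ω, ν x = pb ω α x := by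
  obtain ⟨χ, hχ, hχs, hχ1⟩ := exists_cutoff_real (K := Icc a b) isCompact_Icc
    (isOpen_Ioo (a := a - δ) (b := b + δ)) (fun y hy => h.Icc_sub hy)
  let B : ℝ × ℝ → ℝ := fun p => χ p.2 * (c p.1 p.2 * ν (Γ p.1 p.2))
  have hB : ContDiff ℝ (⊤ : ℕ∞) B := by
    rw [contDiff_iff_contDiffAt]
    rintro ⟨t, y⟩
    by_cases hy : y ∈ Ioo (a - δ) (b + δ)
    · exact (hχ.comp contDiff_snd).contDiffAt.mul ((h.csmooth t y hy).mul (hν.comp h.smooth).contDiffAt)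
    · have hx' : y ∉ tsupport χ := fun hh => hy (hχs hh)
      have h1 := notMem_tsupport_iff_eventuallyEq.1 hx'
      have : B =ᶠ[nhds (t, y)] fun _ => 0 := by
        filter_upwards [(continuous_snd.tendsto (t, y)).eventually h1] with z hz
        change χ z.2 * _ = 0
        rw [hz]; simp
      exact contDiffAt_const.congr_of_eventuallyEq this
  have hBp : ∀ y, Function.Periodic (fun t => B (t, y)) P := by
    intro y t
    simp only [B, h.per, h.cper]
  have hBc : ∀ y, Continuous fun t => B (t, y) := fun y => hB.continuous.comp (by fun_prop)
  let A : ℝ × ℝ → ℝ := fun p => p.1 * (∫ r in (0:ℝ)..1, B (p.1 * r, p.2)) - p.1 * ∫ r in (0:ℝ)..1, B (P * r, p.2)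
  have hA : ContDiff ℝ (⊤ : ℕ∞) A := by
    have h1 := contDiff_param_integral (fun q : ℝ × (ℝ × ℝ) => B (q.2.1 * q.1, q.2.2)) (hB.comp (by fun_prop))
    have h2 := contDiff_param_integral (fun q : ℝ × (ℝ × ℝ) => B (P * q.1, q.2.2)) (hB.comp (by fun_prop))
    exact (contDiff_fst.mul h1).sub (contDiff_fst.mul h2)
  have hA' : ∀ t y, A (t, y) = (∫ r in (0:ℝ)..t, B (r, y)) - t * ∫ r in (0:ℝ)..1, B (P * r, y) := by
    intro t y
    have := intervalIntegral.mul_integral_comp_mul_left (a := 0) (b := 1) (f := fun r => B (r, y)) t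
    simp only [mul_zero, mul_one] at this
    simp only [A, this]
  have hM : ∀ y, P * (∫ r in (0:ℝ)..1, B (P * r, y)) = ∫ r in (0:ℝ)..P, B (r, y) := by
    intro y
    have := intervalIntegral.mul_integral_comp_mul_left (a := 0) (b := 1) (f := fun r => B (r, y)) P
    simpa only [mul_zero, mul_one] using this
  have hAp : ∀ t y, A (t + P, y) = A (t, y) := by
    intro t y
    rw [hA', hA', add_mul, hM, ← intervalIntegral.integral_add_adjacent_intervals
      ((hBc y).intervalIntegrable 0 t) ((hBc y).intervalIntegrable t (t + P)),
      (hBp y).intervalIntegral_add_eq t 0, zero_add]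
    ring
  obtain ⟨α, hα, hαA⟩ := h.descend hω hΩc A hA hAp
  refine ⟨α, hα, ?_⟩
  intro x hx
  obtain ⟨t, -, e⟩ := h.cover x hx
  have hy := h.range x hx
  set y := ω x with hydef
  have hy' := h.Icc_sub hy
  have hBy : ∀ t, B (t, y) = c t y * ν (Γ t y) := fun t => by simp only [B, hχ1 y hy, one_mul]
  have hM0 : (∫ r in (0:ℝ)..1, B (P * r, y)) = 0 := by
    have h1 := hJ y hy
    rw [h.Jint_eq hω hν.continuous hy, integral_Ico_eq_integral_Ioc,
      ← intervalIntegral.integral_of_le h.hP.le] at h1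
    have h2 := hM y
    simp only [hBy] at h2
    rw [h1] at h2
    simp only [hBy]
    exact (mul_eq_zero.1 h2).resolve_left h.hP.ne'
  have d1 : HasDerivAt (fun t => α (Γ t y)) (c t y * ν (Γ t y)) t := by
    have : (fun t => α (Γ t y)) = fun t => ∫ r in (0:ℝ)..t, B (r, y) := by
      funext t
      rw [hαA t y hy, hA', hM0]; ring
    rw [this, ← hBy]
    exact intervalIntegral.integral_hasDerivAt_right ((hBc y).intervalIntegrable _ _)
      ((hBc y).stronglyMeasurableAtFilter _ _) (hBc y).continuousAt
  have d2 : HasDerivAt (fun t => α (Γ t y)) (c t y * pb ω α (Γ t y)) t := by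
    have e1 : HasFDerivAt α (fderiv ℝ α (Γ t y)) (Γ t y) :=
      (hα.differentiable (by simp)).differentiableAt.hasFDerivAt
    have e2 := e1.comp_hasDerivAt t (h.dt t y hy')
    rw [map_smul, fderiv_XX] at e2
    exact e2
  have := mul_left_cancel₀ (h.cpos t y hy').ne' (d1.unique d2)
  rwa [e] at this

lemma Chart.const_comp (h : Chart Ω ω a b P δ Γ c)
    (hωlc : ∀ x ∈ frontier Ω, ∀ y ∈ connectedComponentIn (frontier Ω) x, ω y = ω x)
    {ν : E2 → ℝ} (hν0 : ∀ x ∈ frontier Ω, ν x = 0)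
    {α : E2 → ℝ} (hα : ContDiff ℝ (⊤ : ℕ∞) α) (hpb : ∀ x ∈ closure Ω, ν x = pb ω α x) :
    ∀ x ∈ frontier Ω, ∀ y ∈ connectedComponentIn (frontier Ω) x, α y = α x := by
  intro x hx z hz
  set C := connectedComponentIn (frontier Ω) x with hC
  have hCf : C ⊆ frontier Ω := connectedComponentIn_subset _ _
  have hxK : x ∈ closure Ω := frontier_subset_closure hx
  have hy := h.range x hxK
  have hlc := hωlc x hx
  rw [← hC] at hlc
  set y := ω x with hydef
  have hy' := h.Icc_sub hy
  set T : Set ℝ := {t | Γ t y ∈ C} with hT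
  have hd : ∀ t ∈ T, HasFDerivWithinAt (fun t => α (Γ t y)) (0 : ℝ →L[ℝ] ℝ) T t := by
    intro t ht
    have e1 : HasFDerivAt α (fderiv ℝ α (Γ t y)) (Γ t y) :=
      (hα.differentiable (by simp)).differentiableAt.hasFDerivAt
    have e2 := e1.comp_hasDerivAt t (h.dt t y hy')
    rw [map_smul, fderiv_XX, ← hpb _ (frontier_subset_closure (hCf ht)), hν0 _ (hCf ht), smul_zero] at e2
    have e3 : HasDerivAt (fun t => α (Γ t y)) 0 t := e2
    have e4 := e3.hasFDerivAt.hasFDerivWithinAt (s := T)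
    have e5 : ContinuousLinearMap.toSpanSingleton ℝ (0 : ℝ) = (0 : ℝ →L[ℝ] ℝ) := by
      ext; simp
    rw [e5] at e4
    exact e4
  have hnull := addHaar_image_eq_zero_of_det_fderivWithin_eq_zero (volume : Measure ℝ) hd (by intro x _; simp)
  have himg : α '' C ⊆ (fun t => α (Γ t y)) '' T := by
    rintro _ ⟨w, hw, rfl⟩
    obtain ⟨t, -, e⟩ := h.cover w (frontier_subset_closure (hCf hw))
    rw [hlc w hw] at e
    refine ⟨t, ?_, by simp only [e]⟩
    change Γ t y ∈ C
    rwa [e]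
  have hn : volume (α '' C) = 0 := measure_mono_null himg hnull
  have hpre : IsPreconnected (α '' C) :=
    isPreconnected_connectedComponentIn.image _ hα.continuous.continuousOn
  have hxC : x ∈ C := mem_connectedComponentIn hx
  have key : ∀ u ∈ α '' C, ∀ v ∈ α '' C, ¬ u < v := by
    intro u hu v hv huv
    have h1 : Icc u v ⊆ α '' C := hpre.Icc_subset hu hv
    have h2 := measure_mono_null h1 hn
    rw [Real.volume_Icc] at h2
    simp at h2
    linarith
  exact le_antisymm (not_lt.1 (key _ (mem_image_of_mem _ hxC) _ (mem_image_of_mem _ hz)))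
    (not_lt.1 (key _ (mem_image_of_mem _ hz) _ (mem_image_of_mem _ hxC)))
end


lemma step_integral_aux (p q : ℝ) (hpq : p ≤ q) :
    (fun y => (Iio q).indicator (fun _ => (1:ℝ)) y - (Iio p).indicator (fun _ => (1:ℝ)) y)
      = (Ico p q).indicator (fun _ => (1:ℝ)) := by
  funext y
  by_cases h1 : y < p
  · have h2 : y < q := by linarith
    simp [indicator, h1, h2, not_le.2 h1]
  · by_cases h2 : y < q
    · simp [indicator, h1, h2, not_lt.1 h1]
    · simp [indicator, h1, h2]

lemma step_integral (p q : ℝ) :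
    Integrable (fun y => (Iio p).indicator (fun _ => (1:ℝ)) y - (Iio q).indicator (fun _ => (1:ℝ)) y) ∧
    ∫ y, ((Iio p).indicator (fun _ => (1:ℝ)) y - (Iio q).indicator (fun _ => (1:ℝ)) y) = p - q := by
  have key : ∀ p q : ℝ, p ≤ q →
    Integrable (fun y => (Iio q).indicator (fun _ => (1:ℝ)) y - (Iio p).indicator (fun _ => (1:ℝ)) y) ∧
    ∫ y, ((Iio q).indicator (fun _ => (1:ℝ)) y - (Iio p).indicator (fun _ => (1:ℝ)) y) = q - p := by
    intro p q hpq
    rw [step_integral_aux p q hpq]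
    constructor
    · rw [integrable_indicator_iff measurableSet_Ico]
      exact integrableOn_const (by simp)
    · rw [integral_indicator measurableSet_Ico]
      simp [hpq]
  rcases le_total q p with h | h
  · exact key q p h
  · obtain ⟨h1, h2⟩ := key p q h
    have e : (fun y => (Iio p).indicator (fun _ => (1:ℝ)) y - (Iio q).indicator (fun _ => (1:ℝ)) y)
      = fun y => -((Iio q).indicator (fun _ => (1:ℝ)) y - (Iio p).indicator (fun _ => (1:ℝ)) y) := by
      funext y; ring
    rw [e, integral_neg, h2]
    exact ⟨h1.neg, by ring⟩

lemma ball_ind_integral (m r C : ℝ) (hr : 0 ≤ r) :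
    Integrable ((Icc (m - r) (m + r)).indicator fun _ => C) ∧
    ∫ y, (Icc (m - r) (m + r)).indicator (fun _ => C) y = C * (2 * r) := by
  constructor
  · rw [integrable_indicator_iff measurableSet_Icc]
    exact integrableOn_const (by simp)
  · rw [integral_indicator measurableSet_Icc]
    have : m - r ≤ m + r := by linarith
    simp [this]
    rw [max_eq_left (by linarith)]
    ring

lemma oneD_lip (g : ℝ → ℝ) (w : ℝ → ℝ → ℝ) (lam Q C : ℝ) (hgi : Integrable g)
    (hgQ : ∀ y, |g y| ≤ Q) (hC : 0 ≤ C) (hwc : ∀ ε, Continuous (w ε))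
    (H2 : ∀ ε y, |ε| ≤ 1 → g y ≠ 0 → |w ε y - y| ≤ C * |ε|) (ε : ℝ) (hε : |ε| ≤ 1) :
    |(∫ y, {y | w ε y < lam}.indicator g y) - ∫ y, {y | w 0 y < lam}.indicator g y| ≤ Q * (2 * C) * |ε| := by
  have hm : ∀ ε, MeasurableSet {y | w ε y < lam} := fun ε => measurableSet_lt (hwc ε).measurable measurable_const
  have hQ : 0 ≤ Q := (abs_nonneg _).trans (hgQ 0)
  rw [← integral_sub (hgi.indicator (hm _)) (hgi.indicator (hm _))]
  obtain ⟨i1, i2⟩ := ball_ind_integral lam (C * |ε|) Q (by positivity)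
  have := norm_integral_le_of_norm_le (f := fun y => {y | w ε y < lam}.indicator g y - {y | w 0 y < lam}.indicator g y) i1
    (Filter.Eventually.of_forall ?_)
  · rw [i2, Real.norm_eq_abs] at this
    linarith
  · intro y
    rw [Real.norm_eq_abs]
    by_cases hg : g y = 0
    · have : ∀ s : Set ℝ, s.indicator g y = 0 := fun s => by
        by_cases hs : y ∈ s <;> simp [hs, hg]
      rw [this, this]
      simp only [sub_zero, abs_zero]
      exact indicator_nonneg (fun _ _ => hQ) _
    · have h0 := H2 0 y (by simp) hg
      have h1 := H2 ε y hε hg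
      simp only [abs_zero, mul_zero] at h0
      have h0 : w 0 y = y := by
        have := abs_nonpos_iff.1 h0; linarith
      rw [abs_le] at h1
      by_cases hy : y ∈ Icc (lam - C * |ε|) (lam + C * |ε|)
      · rw [indicator_of_mem hy]
        have hgy := hgQ y
        by_cases c1 : w ε y < lam <;> by_cases c2 : w 0 y < lam <;>
          simp [indicator, c1, c2, hgy, hQ]
      · rw [indicator_of_notMem hy]
        have : w ε y < lam ↔ w 0 y < lam := by
          rw [h0]
          constructor
          · intro h2
            by_contra h3
            exact hy ⟨by linarith [mul_nonneg hC (abs_nonneg ε)], by linarith⟩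
          · intro h2
            by_contra h3
            exact hy ⟨by linarith, by linarith [mul_nonneg hC (abs_nonneg ε)]⟩
        simp [indicator, this]

lemma oneD (g : ℝ → ℝ) (w : ℝ → ℝ → ℝ) (lam Q C n0 : ℝ) (hgi : Integrable g)
    (hgQ : ∀ y, |g y| ≤ Q) (hC : 0 ≤ C) (hwc : ∀ ε, Continuous (w ε))
    (H2 : ∀ ε y, |ε| ≤ 1 → g y ≠ 0 → |w ε y - y| ≤ C * |ε|)
    (H : ∀ η > 0, ∀ᶠ p : ℝ × ℝ in nhds (0, lam), |w p.1 p.2 - p.2 - p.1 * n0| ≤ η * |p.1|)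
    (hg0 : n0 = 0 ∨ ContinuousAt g lam) :
    HasDerivAt (fun ε => ∫ y, {y | w ε y < lam}.indicator g y) (- (g lam * n0)) 0 := by
  have hm : ∀ ε, MeasurableSet {y | w ε y < lam} := fun ε => measurableSet_lt (hwc ε).measurable measurable_const
  have hQ : 0 ≤ Q := (abs_nonneg _).trans (hgQ 0)
  rw [hasDerivAt_iff_isLittleO]
  rw [Asymptotics.isLittleO_iff]
  intro θ hθ
  -- choose a small constant
  set D : ℝ := 2 * Q + 2 * |n0| + 1 with hD
  have hDpos : 0 < D := by positivity
  set η : ℝ := θ / D with hη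
  have hηpos : 0 < η := by positivity
  have hg1 : ∀ᶠ y in nhds lam, n0 = 0 ∨ |g y - g lam| ≤ η := by
    rcases hg0 with h | h
    · exact Filter.Eventually.of_forall fun _ => Or.inl h
    · filter_upwards [h (Metric.ball_mem_nhds _ hηpos)] with y hy
      right
      exact (Metric.mem_ball.1 hy).le
  obtain ⟨ρ1, hρ1, hb1⟩ := Metric.eventually_nhds_iff.1 hg1
  obtain ⟨ρ2, hρ2, hb2⟩ := Metric.eventually_nhds_iff.1 (H η hηpos)
  set M : ℝ := C + |n0| + 1 with hM
  have hMpos : 0 < M := by positivity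
  have hr : 0 < min 1 (min (ρ1 / M) (min (ρ2 / M) ρ2)) := by positivity
  filter_upwards [Metric.ball_mem_nhds (0:ℝ) hr] with ε hε
  rw [Metric.mem_ball, dist_zero_right, Real.norm_eq_abs, lt_min_iff, lt_min_iff, lt_min_iff,
    lt_div_iff₀ hMpos, lt_div_iff₀ hMpos] at hε
  obtain ⟨hε1, hε2, hε3, hε4⟩ := hε
  have hεn := abs_nonneg ε
  obtain ⟨s1, s2⟩ := step_integral (lam - ε * n0) lam
  have eI : (∫ y, {y | w ε y < lam}.indicator g y) - (∫ y, {y | w 0 y < lam}.indicator g y)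
      - (ε - 0) • (- (g lam * n0)) = ∫ y, ({y | w ε y < lam}.indicator g y - {y | w 0 y < lam}.indicator g y
        - g lam * ((Iio (lam - ε * n0)).indicator (fun _ => (1:ℝ)) y - (Iio lam).indicator (fun _ => (1:ℝ)) y)) := by
    have k1 : Integrable fun y => {y | w ε y < lam}.indicator g y - {y | w 0 y < lam}.indicator g y :=
      (hgi.indicator (hm _)).sub (hgi.indicator (hm _))
    rw [integral_sub k1 (s1.const_mul _),
      integral_sub (hgi.indicator (hm _)) (hgi.indicator (hm _)), integral_const_mul, s2]
    simp only [smul_eq_mul]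
    ring
  rw [eI]
  obtain ⟨i1, i2⟩ := ball_ind_integral (lam - ε * n0) (η * |ε|) Q (by positivity)
  obtain ⟨j1, j2⟩ := ball_ind_integral lam (|n0| * |ε|) η (by positivity)
  refine (norm_integral_le_of_norm_le (i1.add j1) (Filter.Eventually.of_forall ?_)).trans ?_
  · intro y
    rw [Real.norm_eq_abs]
    simp only [Pi.add_apply]
    have split : {y | w ε y < lam}.indicator g y - {y | w 0 y < lam}.indicator g y
        - g lam * ((Iio (lam - ε * n0)).indicator (fun _ => (1:ℝ)) y - (Iio lam).indicator (fun _ => (1:ℝ)) y)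
        = ({y | w ε y < lam}.indicator g y - (Iio (lam - ε * n0)).indicator g y
            + ((Iio lam).indicator g y - {y | w 0 y < lam}.indicator g y))
          + (g y - g lam) * ((Iio (lam - ε * n0)).indicator (fun _ => (1:ℝ)) y - (Iio lam).indicator (fun _ => (1:ℝ)) y) := by
      simp only [indicator]
      split_ifs <;> ring
    rw [split]
    refine (abs_add_le _ _).trans (add_le_add ?_ ?_)
    · by_cases hg : g y = 0
      · have : ∀ s : Set ℝ, s.indicator g y = 0 := fun s => by
          by_cases hs : y ∈ s <;> simp [hs, hg]
        rw [this, this, this, this]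
        simp only [sub_zero, add_zero, abs_zero]
        exact indicator_nonneg (fun _ _ => hQ) _
      · have h0 := H2 0 y (by simp) hg
        have h1 := H2 ε y hε1.le hg
        simp only [abs_zero, mul_zero] at h0
        have h0 : w 0 y = y := by
          have := abs_nonpos_iff.1 h0; linarith
        have e0 : {y | w 0 y < lam}.indicator g y = (Iio lam).indicator g y := by
          simp [indicator, h0]
        rw [e0, sub_self, add_zero]
        by_cases hy : y ∈ Icc (lam - ε * n0 - η * |ε|) (lam - ε * n0 + η * |ε|)
        · rw [indicator_of_mem hy]
          have hgy := hgQ y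
          by_cases c1 : w ε y < lam <;> by_cases c2 : y < lam - ε * n0 <;>
            simp [indicator, c1, c2, hgy, hQ]
        · rw [indicator_of_notMem hy]
          have hn : |ε * n0| ≤ |n0| * |ε| := by rw [abs_mul, mul_comm]
          have hiff : w ε y < lam ↔ y < lam - ε * n0 := by
            by_cases hclose : |y - lam| < ρ2
            · have hb := hb2 (y := (ε, y)) (by
                rw [Prod.dist_eq, max_lt_iff]
                exact ⟨by simpa [Real.dist_eq] using hε4, by simpa [Real.dist_eq] using hclose⟩)
              simp only at hb
              rw [abs_le] at hb
              have n3 : 0 ≤ η * |ε| := by positivity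
              constructor
              · intro h2
                by_contra h3
                exact hy ⟨by linarith, by linarith⟩
              · intro h2
                by_contra h3
                exact hy ⟨by linarith, by linarith⟩
            · have hfar : M * |ε| < |y - lam| := by linarith [not_lt.1 hclose]
              have hfar' : C * |ε| + |n0| * |ε| + |ε| < |y - lam| := by
                have e : M * |ε| = C * |ε| + |n0| * |ε| + |ε| := by rw [hM]; ring
                linarith
              have n1 : 0 ≤ |n0| * |ε| := by positivity
              have n2 : 0 ≤ C * |ε| := by positivity
              rw [abs_le] at h1 hn
              rcases abs_cases (y - lam) with ⟨c1, c2⟩ | ⟨c1, c2⟩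
              · exact ⟨fun h2 => by linarith, fun h2 => by linarith⟩
              · exact ⟨fun h2 => by linarith, fun h2 => by linarith⟩
          simp [indicator, hiff]
    · rw [abs_mul]
      have hn : |ε * n0| = |n0| * |ε| := by rw [abs_mul, mul_comm]
      have hn' := abs_le.1 hn.le
      by_cases hy : y ∈ Icc (lam - |n0| * |ε|) (lam + |n0| * |ε|)
      · rw [indicator_of_mem hy]
        rcases hb1 (y := y) (by
          rw [Real.dist_eq, abs_lt]
          have n2 : 0 ≤ C * |ε| := by positivity
          rw [hM] at hε2
          rcases eq_or_lt_of_le hεn with e | e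
          · rw [← e] at hy
            simp only [mul_zero, sub_zero, add_zero] at hy
            constructor <;> linarith [hy.1, hy.2]
          · have e2 : |ε| * (C + |n0| + 1) = C * |ε| + |n0| * |ε| + |ε| := by ring
            constructor <;> linarith [hy.1, hy.2]) with h | h
        · rw [h]; simp [hηpos.le]
        · refine le_trans (mul_le_of_le_one_right (abs_nonneg _) ?_) h
          simp only [indicator]
          split_ifs <;> simp
      · rw [indicator_of_notMem hy]
        have hiff : y < lam - ε * n0 ↔ y < lam := by
          have n1 : 0 ≤ |n0| * |ε| := by positivity
          constructor
          · intro h2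
            by_contra h3
            exact hy ⟨by linarith, by linarith⟩
          · intro h2
            by_contra h3
            exact hy ⟨by linarith, by linarith⟩
        simp [indicator, hiff]
  · rw [integral_add' i1 j1, i2, j2]
    simp only [sub_zero, Real.norm_eq_abs]
    have : Q * (2 * (η * |ε|)) + η * (2 * (|n0| * |ε|)) = (η * (2 * Q + 2 * |n0|)) * |ε| := by ring
    rw [this]
    have h3 : η * D = θ := by rw [hη]; field_simp
    have : η * (2 * Q + 2 * |n0|) ≤ θ := by rw [← h3, hD]; nlinarith
    exact mul_le_mul_of_nonneg_right this hεn


def coordL : E2 →L[ℝ] ℝ × ℝ :=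
  (EuclideanSpace.proj (0 : Fin 2) : E2 →L[ℝ] ℝ).prod (EuclideanSpace.proj (1 : Fin 2) : E2 →L[ℝ] ℝ)

lemma coordL_apply (x : E2) : coordL x = (x 0, x 1) := rfl

lemma coordL_inj : Function.Injective coordL := by
  intro x y h
  rw [coordL_apply, coordL_apply, Prod.mk.injEq] at h
  ext i
  fin_cases i
  · exact h.1
  · exact h.2

lemma coordL_mp : MeasurePreserving coordL volume volume :=
  (volume_preserving_finTwoArrow ℝ).comp (PiLp.volume_preserving_ofLp (Fin 2))

lemma volume_coordL (S : Set E2) : volume (coordL '' S) = volume S := by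
  have hemb : MeasurableEmbedding coordL := coordL.continuous.measurableEmbedding coordL_inj
  rw [← coordL_mp.measure_preimage_emb hemb, preimage_image_eq _ coordL_inj]

lemma det_prod (f : (ℝ × ℝ) →L[ℝ] (ℝ × ℝ)) :
    f.det = (f (1, 0)).1 * (f (0, 1)).2 - (f (0, 1)).1 * (f (1, 0)).2 := by
  change LinearMap.det (f : (ℝ × ℝ) →ₗ[ℝ] (ℝ × ℝ)) = _
  rw [← LinearMap.det_toMatrix (Module.Basis.finTwoProd ℝ), Matrix.det_fin_two]
  simp [LinearMap.toMatrix_apply]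

section
variable {Ω : Set E2} {ω : E2 → ℝ} {a b P δ : ℝ} {Γ : ℝ → ℝ → E2} {c : ℝ → ℝ → ℝ}

lemma Chart.volume_eq (h : Chart Ω ω a b P δ Γ c) (hω : ContDiff ℝ (⊤ : ℕ∞) ω)
    {S : Set E2} (hS : MeasurableSet S) (hSK : S ⊆ closure Ω) :
    volume S = ∫⁻ p in (Ico 0 P ×ˢ Icc a b) ∩ Gu Γ ⁻¹' S, ENNReal.ofReal (c p.1 p.2) := by
  set R := (Ico 0 P ×ˢ Icc a b) ∩ Gu Γ ⁻¹' S with hR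
  have hGd : Differentiable ℝ (Gu Γ) := h.smooth.differentiable (by simp)
  have hRm : MeasurableSet R :=
    (measurableSet_Ico.prod measurableSet_Icc).inter (hGd.continuous.measurable hS)
  have himg : Gu Γ '' R = S := by
    apply Subset.antisymm
    · rintro _ ⟨p, hp, rfl⟩; exact hp.2
    · intro x hx
      obtain ⟨t, ht, e⟩ := h.cover x (hSK hx)
      refine ⟨(t, ω x), ⟨⟨ht, h.range x (hSK hx)⟩, ?_⟩, e⟩
      change Γ t (ω x) ∈ S
      rwa [e]
  have hinj : InjOn (Gu Γ) R := by
    rintro ⟨t, y⟩ hp ⟨s, z⟩ hq e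
    have hy := h.Icc_sub hp.1.2
    have hz := h.Icc_sub hq.1.2
    change Γ t y = Γ s z at e
    have e1 : y = z := by
      have := congrArg ω e
      rwa [h.level t y hy, h.level s z hz] at this
    subst e1
    rw [h.inj t hp.1.1 s hq.1.1 y e]
  have hd : ∀ p ∈ R, HasFDerivWithinAt (fun p => coordL (Gu Γ p)) (coordL.comp (fderiv ℝ (Gu Γ) p)) R p :=
    fun p _ => (coordL.hasFDerivAt.comp p (hGd p).hasFDerivAt).hasFDerivWithinAt
  have key := lintegral_abs_det_fderiv_eq_addHaar_image volume hRm hd (coordL_inj.comp_injOn hinj)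
  have e : (fun p => coordL (Gu Γ p)) '' R = coordL '' S := by
    rw [← himg, image_image]
  rw [e, volume_coordL] at key
  rw [← key]
  apply setLIntegral_congr_fun hRm
  rintro ⟨t, y⟩ hp
  have hy := h.Icc_sub hp.1.2
  simp only
  congr 1
  rw [det_prod]
  simp only [ContinuousLinearMap.comp_apply, coordL_apply]
  have h1 := h.fd_one t hy
  have h2 := h.fd_two hω t hy
  rw [fderiv_eq_pd] at h2
  rw [h1]
  have hx0 : (c t y • XX ω (Γ t y)) 0 = c t y * (- pd 1 ω (Γ t y)) := by simp [XX]
  have hx1 : (c t y • XX ω (Γ t y)) 1 = c t y * (pd 0 ω (Γ t y)) := by simp [XX]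
  rw [hx0, hx1]
  set v := fderiv ℝ (Gu Γ) (t, y) (0, 1)
  have : c t y * -pd 1 ω (Γ t y) * v 1 - v 0 * (c t y * pd 0 ω (Γ t y)) = - c t y := by
    have : c t y * -pd 1 ω (Γ t y) * v 1 - v 0 * (c t y * pd 0 ω (Γ t y))
      = - c t y * (v 0 * pd 0 ω (Γ t y) + v 1 * pd 1 ω (Γ t y)) := by ring
    rw [this, h2, mul_one]
  rw [this, abs_neg, abs_of_pos (h.cpos t y hy)]

lemma Chart.exists_q (h : Chart Ω ω a b P δ Γ c) :
    ∃ q : ℝ × ℝ → ℝ, Continuous q ∧ ∀ t, ∀ y ∈ Icc a b, q (t, y) = c t y := by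
  obtain ⟨χ, hχ, hχs, hχ1⟩ := exists_cutoff_real (K := Icc a b) isCompact_Icc
    (isOpen_Ioo (a := a - δ) (b := b + δ)) (fun y hy => h.Icc_sub hy)
  refine ⟨fun p => χ p.2 * c p.1 p.2, ?_, fun t y hy => by simp only [hχ1 y hy, one_mul]⟩
  rw [continuous_iff_continuousAt]
  rintro ⟨t, y⟩
  by_cases hy : y ∈ Ioo (a - δ) (b + δ)
  · exact (hχ.continuous.comp continuous_snd).continuousAt.mul (h.csmooth t y hy).continuousAt
  · have hx' : y ∉ tsupport χ := fun hh => hy (hχs hh)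
    have h1 := notMem_tsupport_iff_eventuallyEq.1 hx'
    have : (fun p : ℝ × ℝ => χ p.2 * c p.1 p.2) =ᶠ[nhds (t, y)] fun _ => 0 := by
      filter_upwards [(continuous_snd.tendsto (t, y)).eventually h1] with z hz
      rw [hz]; simp
    exact continuousAt_const.congr this.symm

-- the volume as an iterated integral
lemma Chart.volume_toReal (h : Chart Ω ω a b P δ Γ c) (hω : ContDiff ℝ (⊤ : ℕ∞) ω)
    {q : ℝ × ℝ → ℝ} (hq : Continuous q) (hqc : ∀ t, ∀ y ∈ Icc a b, q (t, y) = c t y)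
    {S : Set E2} (hS : MeasurableSet S) (hSK : S ⊆ closure Ω) :
    (volume S).toReal = ∫ t in Ico 0 P, ∫ y, ({y | Γ t y ∈ S} ∩ Icc a b).indicator (fun y => q (t, y)) y := by
  have hGc : Continuous (Gu Γ) := h.smooth.continuous
  have hRm : MeasurableSet (Ico (0:ℝ) P ×ˢ Icc a b) := measurableSet_Ico.prod measurableSet_Icc
  have hSm : MeasurableSet (Gu Γ ⁻¹' S) := hGc.measurable hS
  have hIntg : IntegrableOn q (Ico (0:ℝ) P ×ˢ Icc a b) :=
    (hq.continuousOn.integrableOn_compact (isCompact_Icc.prod isCompact_Icc)).mono_set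
      (prod_mono Ico_subset_Icc_self subset_rfl)
  have e1 : (volume S).toReal = ∫ p in (Ico 0 P ×ˢ Icc a b) ∩ Gu Γ ⁻¹' S, q p := by
    rw [h.volume_eq hω hS hSK, integral_eq_lintegral_of_nonneg_ae]
    · congr 1
      apply setLIntegral_congr_fun (hRm.inter hSm)
      rintro ⟨t, y⟩ hp
      simp only [hqc t y hp.1.2]
    · filter_upwards [ae_restrict_mem (hRm.inter hSm)] with p hp
      have := h.cpos p.1 p.2 (h.Icc_sub hp.1.2)
      rw [← hqc p.1 p.2 hp.1.2] at this
      exact this.le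
    · exact hq.aestronglyMeasurable
  rw [e1, ← setIntegral_indicator hSm, Measure.volume_eq_prod,
    setIntegral_prod _ (IntegrableOn.indicator hIntg hSm)]
  apply setIntegral_congr_fun measurableSet_Ico
  intro t _
  simp only
  rw [← integral_indicator measurableSet_Icc]
  congr 1
  funext y
  by_cases h1 : y ∈ Icc a b <;> by_cases h2 : Γ t y ∈ S <;> simp [indicator, Gu, h1, h2]
end


section
variable {Ω : Set E2} {ω : E2 → ℝ} {a b P δ : ℝ} {Γ : ℝ → ℝ → E2} {c : ℝ → ℝ → ℝ}
  {W : ℝ → E2 → ℝ} {ν : E2 → ℝ}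

lemma W_deriv (hW : ContDiff ℝ (⊤ : ℕ∞) (fun p : ℝ × E2 => W p.1 p.2)) (ε : ℝ) (x : E2) :
    HasDerivAt (fun ε => W ε x) (fderiv ℝ (fun p : ℝ × E2 => W p.1 p.2) (ε, x) (1, 0)) ε := by
  have e1 : HasDerivAt (fun ε : ℝ => ((ε, x) : ℝ × E2)) (1, 0) ε :=
    (hasDerivAt_id ε).prodMk (hasDerivAt_const _ _)
  have e2 : HasFDerivAt (fun p : ℝ × E2 => W p.1 p.2) (fderiv ℝ (fun p : ℝ × E2 => W p.1 p.2) (ε, x)) (ε, x) :=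
    (hW.differentiable (by simp)).differentiableAt.hasFDerivAt
  exact e2.comp_hasDerivAt ε e1

lemma nu_eq (hW : ContDiff ℝ (⊤ : ℕ∞) (fun p : ℝ × E2 => W p.1 p.2))
    (hν : ∀ x, HasDerivAt (fun ε => W ε x) (ν x) 0) (x : E2) :
    ν x = fderiv ℝ (fun p : ℝ × E2 => W p.1 p.2) (0, x) (1, 0) :=
  (hν x).unique (W_deriv hW 0 x)

lemma nu_smooth (hW : ContDiff ℝ (⊤ : ℕ∞) (fun p : ℝ × E2 => W p.1 p.2))
    (hν : ∀ x, HasDerivAt (fun ε => W ε x) (ν x) 0) : ContDiff ℝ (⊤ : ℕ∞) ν := by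
  have : ν = fun x => fderiv ℝ (fun p : ℝ × E2 => W p.1 p.2) (0, x) (1, 0) := funext fun x => nu_eq hW hν x
  rw [this]
  have h1 : ContDiff ℝ (⊤ : ℕ∞) (fderiv ℝ (fun p : ℝ × E2 => W p.1 p.2)) :=
    hW.fderiv_right (by simp)
  exact (h1.comp (contDiff_const.prodMk contDiff_id)).clm_apply contDiff_const

lemma W_bound (hΩc : IsCompact (closure Ω)) (hW : ContDiff ℝ (⊤ : ℕ∞) (fun p : ℝ × E2 => W p.1 p.2)) :
    ∃ C, 0 ≤ C ∧ ∀ ε, |ε| ≤ 1 → ∀ x ∈ closure Ω, |W ε x - W 0 x| ≤ C * |ε| := by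
  have h1 : Continuous (fun p : ℝ × E2 => fderiv ℝ (fun p : ℝ × E2 => W p.1 p.2) p (1, 0)) :=
    (hW.continuous_fderiv (by simp)).clm_apply continuous_const
  obtain ⟨C, hC⟩ := ((isCompact_Icc (a := (-1:ℝ)) (b := 1)).prod hΩc).exists_bound_of_continuousOn h1.continuousOn
  refine ⟨max C 0, le_max_right _ _, ?_⟩
  intro ε hε x hx
  have := (convex_Icc (-1:ℝ) 1).norm_image_sub_le_of_norm_hasDerivWithin_le (C := max C 0)
    (f := fun ε => W ε x) (fun s _ => (W_deriv hW s x).hasDerivWithinAt)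
    (fun s hs => (hC (s, x) ⟨hs, hx⟩).trans (le_max_left _ _)) (x := 0) (y := ε) (by simp) (abs_le.1 hε)
  simpa using this

lemma W_strict (hW : ContDiff ℝ (⊤ : ℕ∞) (fun p : ℝ × E2 => W p.1 p.2))
    (hν : ∀ x, HasDerivAt (fun ε => W ε x) (ν x) 0) (x0 : E2) (η : ℝ) (hη : 0 < η) :
    ∀ᶠ p : ℝ × E2 in nhds (0, x0), |W p.1 p.2 - W 0 p.2 - p.1 * ν x0| ≤ η * |p.1| := by
  have h1 : HasStrictFDerivAt (fun p : ℝ × E2 => W p.1 p.2)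
      (fderiv ℝ (fun p : ℝ × E2 => W p.1 p.2) (0, x0)) (0, x0) :=
    hW.contDiffAt.hasStrictFDerivAt (by simp)
  have h2 := (Asymptotics.isLittleO_iff.1 h1.isLittleO) hη
  have hc : Continuous (fun p : ℝ × E2 => (p, ((0:ℝ), p.2))) := by fun_prop
  have h3 := (hc.tendsto (0, x0)).eventually h2
  filter_upwards [h3] with p hp
  have e : p - ((0:ℝ), p.2) = p.1 • ((1 : ℝ), (0 : E2)) := by
    ext <;> simp
  rw [e, map_smul, ← nu_eq hW hν x0, norm_smul] at hp
  simpa [Prod.norm_def] using hp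

lemma Chart.deriv_in (h : Chart Ω ω a b P δ Γ c) (hA : AnnData Ω ω a b) (hΩo : IsOpen Ω)
    (hω : ContDiff ℝ (⊤ : ℕ∞) ω) (hΩc : IsCompact (closure Ω))
    (hW : ContDiff ℝ (⊤ : ℕ∞) (fun p : ℝ × E2 => W p.1 p.2)) (hW0 : W 0 = ω)
    (hν : ∀ x, HasDerivAt (fun ε => W ε x) (ν x) 0) (hν0 : ∀ x ∈ frontier Ω, ν x = 0)
    {lam : ℝ} (hl : lam ∈ Icc a b) :
    HasDerivAt (fun ε => (volume {x ∈ Ω | W ε x < lam}).toReal)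
      (- Jint Ω ω (fun x => ν x / ‖gradient ω x‖) lam) 0 := by
  have hνc : Continuous ν := (nu_smooth hW hν).continuous
  have hΓc : Continuous (fun p : ℝ × ℝ => Γ p.1 p.2) := h.smooth.continuous
  have hWc : Continuous (fun p : ℝ × E2 => W p.1 p.2) := hW.continuous
  have hWe : ∀ ε, Continuous (W ε) := fun ε => hWc.comp (continuous_const.prodMk continuous_id)
  have hΓy : ∀ t, Continuous fun y => Γ t y := fun t => hΓc.comp (continuous_const.prodMk continuous_id)
  have hl' := h.Icc_sub hl
  obtain ⟨q, hq, hqc⟩ := h.exists_q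
  have hqy : ∀ t, Continuous fun y => q (t, y) := fun t => hq.comp (continuous_const.prodMk continuous_id)
  obtain ⟨Q, hQ⟩ := ((isCompact_Icc (a := (0:ℝ)) (b := P)).prod (isCompact_Icc (a := a) (b := b))).exists_bound_of_continuousOn hq.continuousOn
  obtain ⟨C, hC, hCb⟩ := W_bound hΩc hW
  have hSm : ∀ ε, MeasurableSet {x ∈ Ω | W ε x < lam} := fun ε =>
    hΩo.measurableSet.inter (measurableSet_lt (hWe ε).measurable measurable_const)
  have hSK : ∀ ε, {x ∈ Ω | W ε x < lam} ⊆ closure Ω := fun ε x hx => subset_closure hx.1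
  let g : ℝ → ℝ → ℝ := fun t => ({y | Γ t y ∈ Ω} ∩ Icc a b).indicator (fun y => q (t, y))
  have hgset : ∀ t, MeasurableSet ({y | Γ t y ∈ Ω} ∩ Icc a b) := fun t =>
    (hΩo.preimage (hΓy t)).measurableSet.inter measurableSet_Icc
  have hgi : ∀ t, Integrable (g t) := fun t => by
    rw [integrable_indicator_iff (hgset t)]
    exact ((hqy t).continuousOn.integrableOn_compact isCompact_Icc).mono_set inter_subset_right
  let F : ℝ → ℝ → ℝ := fun ε t => ∫ y, {y | W ε (Γ t y) < lam}.indicator (g t) y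
  have hFeq : ∀ ε t, F ε t = ∫ y, ({y | Γ t y ∈ {x ∈ Ω | W ε x < lam}} ∩ Icc a b).indicator (fun y => q (t, y)) y := by
    intro ε t
    simp only [F, g]
    congr 1
    funext y
    rw [indicator_indicator]
    congr 1
    ext y
    simp only [mem_inter_iff, mem_ofPred_eq]
    tauto
  have hvol : (fun ε => (volume {x ∈ Ω | W ε x < lam}).toReal) = fun ε => ∫ t in Ico 0 P, F ε t := by
    funext ε
    rw [h.volume_toReal hω hq hqc (hSm ε) (hSK ε)]
    simp only [hFeq]
  have hQ0 : 0 ≤ Q := (norm_nonneg _).trans (hQ (0, lam) ⟨⟨le_rfl, h.hP.le⟩, hl⟩)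
  have hgQ : ∀ t ∈ Ico 0 P, ∀ y, |g t y| ≤ Q := by
    intro t ht y
    by_cases hy : y ∈ {y | Γ t y ∈ Ω} ∩ Icc a b
    · simp only [g, indicator_of_mem hy]
      exact hQ (t, y) ⟨Ico_subset_Icc_self ht, hy.2⟩
    · simp only [g, indicator_of_notMem hy, abs_zero, hQ0]
  have H2 : ∀ t ε y, |ε| ≤ 1 → g t y ≠ 0 → |W ε (Γ t y) - y| ≤ C * |ε| := by
    intro t ε y hε hgy
    have hy : y ∈ {y | Γ t y ∈ Ω} ∩ Icc a b := by
      by_contra hcon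
      exact hgy (indicator_of_notMem hcon _)
    have := hCb ε hε (Γ t y) (subset_closure hy.1)
    rwa [hW0, h.level t y (h.Icc_sub hy.2)] at this
  have hFm : ∀ ε, StronglyMeasurable (F ε) := by
    intro ε
    have e : F ε = fun t => ∫ y, (Gu Γ ⁻¹' {x ∈ Ω | W ε x < lam} ∩ (univ ×ˢ Icc a b)).indicator q (t, y) := by
      funext t
      rw [hFeq]
      congr 1
      funext y
      by_cases h1 : y ∈ Icc a b <;> by_cases h2 : Γ t y ∈ {x ∈ Ω | W ε x < lam}
      · rw [indicator_of_mem (show y ∈ {y | Γ t y ∈ {x ∈ Ω | W ε x < lam}} ∩ Icc a b from ⟨h2, h1⟩),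
          indicator_of_mem (show (t, y) ∈ Gu Γ ⁻¹' {x ∈ Ω | W ε x < lam} ∩ (univ ×ˢ Icc a b) from
            ⟨h2, mem_univ _, h1⟩)]
      · rw [indicator_of_notMem (fun hh => h2 hh.1), indicator_of_notMem (fun hh => h2 hh.1)]
      · rw [indicator_of_notMem (fun hh => h1 hh.2), indicator_of_notMem (fun hh => h1 hh.2.2)]
      · rw [indicator_of_notMem (fun hh => h2 hh.1), indicator_of_notMem (fun hh => h2 hh.1)]
    rw [e]
    apply StronglyMeasurable.integral_prod_right'
      (f := fun p : ℝ × ℝ => (Gu Γ ⁻¹' {x ∈ Ω | W ε x < lam} ∩ (univ ×ˢ Icc a b)).indicator q p)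
    exact hq.stronglyMeasurable.indicator
      ((hΓc.measurable (hSm ε)).inter (MeasurableSet.univ.prod measurableSet_Icc))
  let D : ℝ → ℝ := fun t => - (q (t, lam) * ν (Γ t lam))
  have hDc : Continuous D := by
    have h1 : Continuous fun t => q (t, lam) := hq.comp (continuous_id.prodMk continuous_const)
    have h2 : Continuous fun t => Γ t lam := hΓc.comp (continuous_id.prodMk continuous_const)
    exact (h1.mul (hνc.comp h2)).neg
  let F' : ℝ → ℝ →L[ℝ] ℝ := fun t => ContinuousLinearMap.toSpanSingleton ℝ (D t)
  have hdiff : ∀ t ∈ Ico 0 P, HasDerivAt (fun ε => F ε t) (D t) 0 := by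
    intro t ht
    have hfr : Γ t lam ∉ Ω → ν (Γ t lam) = 0 := fun hn => by
      apply hν0
      rw [frontier, hΩo.interior_eq]
      exact ⟨h.maps t lam hl, hn⟩
    have hDe : D t = - (g t lam * ν (Γ t lam)) := by
      by_cases hin : Γ t lam ∈ Ω
      · have : lam ∈ {y | Γ t y ∈ Ω} ∩ Icc a b := ⟨hin, hl⟩
        simp only [D, g, indicator_of_mem this]
      · simp only [D, hfr hin, mul_zero]
    rw [hDe]
    refine oneD (g t) (fun ε y => W ε (Γ t y)) lam Q C (ν (Γ t lam)) (hgi t) (hgQ t ht) hC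
      (fun ε => (hWe ε).comp (hΓy t)) (H2 t) ?_ ?_
    · intro η hη
      have h1 := W_strict hW hν (Γ t lam) η hη
      have hc : Continuous fun p : ℝ × ℝ => (p.1, Γ t p.2) :=
        continuous_fst.prodMk ((hΓy t).comp continuous_snd)
      have h2 := (hc.tendsto (0, lam)).eventually h1
      filter_upwards [h2, continuous_snd.continuousAt.preimage_mem_nhds
        (isOpen_Ioo.mem_nhds (show ((0, lam) : ℝ × ℝ).2 ∈ Ioo (a - δ) (b + δ) from hl'))] with p hp hp2
      rwa [hW0, h.level t p.2 hp2] at hp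
    · by_cases hin : Γ t lam ∈ Ω
      · right
        have hlo : lam ∈ Ioo a b := by
          have := hA.int' (Γ t lam) (interior_maximal subset_closure hΩo hin)
          rwa [h.level t lam hl'] at this
        have : g t =ᶠ[nhds lam] fun y => q (t, y) := by
          filter_upwards [isOpen_Ioo.mem_nhds hlo, (hΩo.preimage (hΓy t)).mem_nhds hin] with y h1 h2
          exact indicator_of_mem (show y ∈ {y | Γ t y ∈ Ω} ∩ Icc a b from ⟨h2, Ioo_subset_Icc_self h1⟩) _
        exact (hqy t).continuousAt.congr this.symm
      · exact Or.inl (hfr hin)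
  have hD := hasFDerivAt_integral_of_dominated_loc_of_lip' (μ := volume.restrict (Ico 0 P)) (F := F)
    (F' := F') (x₀ := (0:ℝ)) (bound := fun _ => Q * (2 * C)) (s := Metric.ball 0 1) (𝕜 := ℝ)
    (Metric.ball_mem_nhds _ one_pos) (fun ε _ => (hFm ε).aestronglyMeasurable) ?_ ?_ ?_ (integrable_const _) ?_
  · have hD2 := hD.2.hasDerivAt
    rw [ContinuousLinearMap.integral_apply hD.1] at hD2
    rw [hvol, h.Jint_eq hω hνc hl]
    have e : (∫ t in Ico 0 P, (F' t) 1) = - ∫ t in Ico 0 P, c t lam * ν (Γ t lam) := by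
      rw [← integral_neg]
      apply setIntegral_congr_fun measurableSet_Ico
      intro t _
      simp [F', D, hqc t lam hl]
    rw [← e]
    exact hD2
  · have hi : Integrable ((Icc a b).indicator fun _ => Q) := by
      rw [integrable_indicator_iff measurableSet_Icc]
      exact integrableOn_const (by simp)
    refine Integrable.of_bound (hFm 0).aestronglyMeasurable (∫ y, (Icc a b).indicator (fun _ => Q) y) ?_
    filter_upwards [ae_restrict_mem measurableSet_Ico] with t ht
    refine norm_integral_le_of_norm_le hi (Filter.Eventually.of_forall fun y => ?_)
    rw [Real.norm_eq_abs]
    by_cases hy : y ∈ Icc a b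
    · rw [indicator_of_mem hy]
      by_cases h2 : y ∈ {y | W 0 (Γ t y) < lam}
      · rw [indicator_of_mem h2]; exact hgQ t ht y
      · rw [indicator_of_notMem h2, abs_zero]; exact hQ0
    · have : g t y = 0 := indicator_of_notMem (fun hh => hy hh.2) _
      rw [indicator_of_notMem hy]
      by_cases h2 : y ∈ {y | W 0 (Γ t y) < lam}
      · rw [indicator_of_mem h2, this, abs_zero]
      · rw [indicator_of_notMem h2, abs_zero]
  · have : Continuous F' := (ContinuousLinearMap.toSpanSingletonCLE (𝕜 := ℝ) (E := ℝ)).continuous.comp hDc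
    exact this.aestronglyMeasurable
  · filter_upwards [ae_restrict_mem measurableSet_Ico] with t ht
    intro ε hε
    rw [Metric.mem_ball, dist_zero_right, Real.norm_eq_abs] at hε
    have := oneD_lip (g t) (fun ε y => W ε (Γ t y)) lam Q C (hgi t) (hgQ t ht) hC
      (fun ε => (hWe ε).comp (hΓy t)) (H2 t) ε hε.le
    rw [sub_zero]
    exact this
  · filter_upwards [ae_restrict_mem measurableSet_Ico] with t ht
    exact (hdiff t ht).hasFDerivAt

lemma Chart.deriv_out (h : Chart Ω ω a b P δ Γ c) (hΩc : IsCompact (closure Ω))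
    (hW : ContDiff ℝ (⊤ : ℕ∞) (fun p : ℝ × E2 => W p.1 p.2)) (hW0 : W 0 = ω)
    {lam : ℝ} (hl : lam ∉ Icc a b) :
    HasDerivAt (fun ε => (volume {x ∈ Ω | W ε x < lam}).toReal) 0 0 := by
  obtain ⟨C, hC, hCb⟩ := W_bound hΩc hW
  rw [hW0] at hCb
  suffices ∃ r, 0 < r ∧ ∃ S, ∀ ε, |ε| < r → {x ∈ Ω | W ε x < lam} = S by
    obtain ⟨r, hr, S, hS⟩ := this
    have e : (fun ε => (volume {x ∈ Ω | W ε x < lam}).toReal) =ᶠ[nhds 0] fun _ => (volume S).toReal := by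
      filter_upwards [Metric.ball_mem_nhds (0:ℝ) hr] with ε hε
      rw [Metric.mem_ball, dist_zero_right, Real.norm_eq_abs] at hε
      rw [hS ε hε]
    exact (hasDerivAt_const _ _).congr_of_eventuallyEq e
  rcases lt_or_ge lam a with h1 | h1
  · refine ⟨min 1 ((a - lam) / (C + 1)), by have := sub_pos.2 h1; positivity, ∅, ?_⟩
    intro ε hε
    rw [lt_min_iff, lt_div_iff₀ (by positivity)] at hε
    rw [eq_empty_iff_forall_notMem]
    rintro x ⟨hx, hx2⟩
    have hxK := subset_closure hx
    have h2 := abs_le.1 (hCb ε hε.1.le x hxK)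
    have h3 := (h.range x hxK).1
    nlinarith [abs_nonneg ε]
  · have h1 : b < lam := by
      by_contra hcon
      exact hl ⟨h1, not_lt.1 hcon⟩
    refine ⟨min 1 ((lam - b) / (C + 1)), by have := sub_pos.2 h1; positivity, Ω, ?_⟩
    intro ε hε
    rw [lt_min_iff, lt_div_iff₀ (by positivity)] at hε
    refine Subset.antisymm (fun x hx => hx.1) fun x hx => ⟨hx, ?_⟩
    have hxK := subset_closure hx
    have h2 := abs_le.1 (hCb ε hε.1.le x hxK)
    have h3 := (h.range x hxK).2
    nlinarith [abs_nonneg ε]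
end

theorem main_aux
    (Ω : Set E2) (hΩo : IsOpen Ω) (hΩb : Bornology.IsBounded Ω)
    (hann : ∃ Φ : E2 → E2, ContDiff ℝ (⊤ : ℕ∞) Φ ∧ InjOn Φ stdAnnulus ∧
      Φ '' stdAnnulus = closure Ω)
    (ω : E2 → ℝ) (hω : ContDiff ℝ (⊤ : ℕ∞) ω)
    (hcrit : ∀ x ∈ closure Ω, gradient ω x ≠ 0)
    (hωlc : ∀ x ∈ frontier Ω, ∀ y ∈ connectedComponentIn (frontier Ω) x, ω y = ω x)
    (W : ℝ → E2 → ℝ) (hW : ContDiff ℝ (⊤ : ℕ∞) (fun p : ℝ × E2 => W p.1 p.2))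
    (hW0 : W 0 = ω)
    (ν : E2 → ℝ) (hν : ∀ x, HasDerivAt (fun ε => W ε x) (ν x) 0)
    (hν0 : ∀ x ∈ frontier Ω, ν x = 0) :
    ((∀ lam : ℝ, HasDerivAt (fun ε => (volume {x ∈ Ω | W ε x < lam}).toReal) 0 0)
        ↔ (∀ lam ∈ ω '' closure Ω,
            Jint Ω ω (fun x => ν x / ‖gradient ω x‖) lam = 0)) ∧
    ((∀ lam ∈ ω '' closure Ω,
        Jint Ω ω (fun x => ν x / ‖gradient ω x‖) lam = 0)
      ↔ (∃ α : E2 → ℝ, ContDiff ℝ (⊤ : ℕ∞) α ∧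
          (∀ x ∈ frontier Ω, ∀ y ∈ connectedComponentIn (frontier Ω) x, α y = α x) ∧
          ∀ x ∈ closure Ω, ν x = pb ω α x)) := by
  have hΩc : IsCompact (closure Ω) := hΩb.isCompact_closure
  obtain ⟨a, b, hA⟩ := annData Ω hΩo hann ω hω hcrit hωlc
  obtain ⟨P, δ, Γ, c, h⟩ := exists_chart Ω hΩo hΩc ω hω hcrit a b hA
  have himg : ω '' closure Ω = Icc a b := by
    apply Subset.antisymm
    · rintro _ ⟨x, hx, rfl⟩; exact h.range x hx
    · intro y hy; exact hA.surj y hy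
  rw [himg]
  have hνs := nu_smooth hW hν
  have hD := fun lam (hl : lam ∈ Icc a b) => h.deriv_in hA hΩo hω hΩc hW hW0 hν hν0 hl
  refine ⟨⟨fun h1 lam hl => ?_, fun h2 lam => ?_⟩, fun h2 => ?_, ?_⟩
  · have := (hD lam hl).unique (h1 lam)
    linarith
  · by_cases hl : lam ∈ Icc a b
    · have := hD lam hl
      rwa [h2 lam hl, neg_zero] at this
    · exact h.deriv_out hΩc hW hW0 hl
  · obtain ⟨α, hα, hpb⟩ := h.exists_alpha hω hΩc hνs h2
    exact ⟨α, hα, h.const_comp hωlc hν0 hα hpb, hpb⟩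
  · rintro ⟨α, hα, -, hpb⟩ lam hl
    exact h.Jint_zero_of_pb hω hνs.continuous hα hpb hl

/-- For Ω diffeomorphic to an annulus and ω without critical points, locally
constant on ∂Ω: the ε-derivative of the distribution function A_{ω_ε} vanishes
at ε = 0 iff ∫_{ω=λ} ν/|∇ω| dl = 0 for all λ in the range of ω, iff
ν = {ω, α} for some stream function α constant on each boundary component. -/
theorem tangent_to_orbit_iff_distribution_function_fixed
    (Ω : Set E2) (hΩo : IsOpen Ω) (hΩb : Bornology.IsBounded Ω)
    (hann : ∃ Φ : E2 → E2, ContDiff ℝ (⊤ : ℕ∞) Φ ∧ InjOn Φ stdAnnulus ∧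
      Φ '' stdAnnulus = closure Ω)
    (ω : E2 → ℝ) (hω : ContDiff ℝ (⊤ : ℕ∞) ω)
    (hcrit : ∀ x ∈ closure Ω, gradient ω x ≠ 0)
    (hωlc : ∀ x ∈ frontier Ω, ∀ y ∈ connectedComponentIn (frontier Ω) x, ω y = ω x)
    (W : ℝ → E2 → ℝ) (hW : ContDiff ℝ (⊤ : ℕ∞) (fun p : ℝ × E2 => W p.1 p.2))
    (hW0 : W 0 = ω)
    (hWcrit : ∀ ε : ℝ, ∀ x ∈ closure Ω, gradient (W ε) x ≠ 0)
    (ν : E2 → ℝ) (hν : ∀ x, HasDerivAt (fun ε => W ε x) (ν x) 0)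
    (hν0 : ∀ x ∈ frontier Ω, ν x = 0) :
    ((∀ lam : ℝ, HasDerivAt (fun ε => (volume {x ∈ Ω | W ε x < lam}).toReal) 0 0)
        ↔ (∀ lam ∈ ω '' closure Ω,
            Jint Ω ω (fun x => ν x / ‖gradient ω x‖) lam = 0)) ∧
    ((∀ lam ∈ ω '' closure Ω,
        Jint Ω ω (fun x => ν x / ‖gradient ω x‖) lam = 0)
      ↔ (∃ α : E2 → ℝ, ContDiff ℝ (⊤ : ℕ∞) α ∧
          (∀ x ∈ frontier Ω, ∀ y ∈ connectedComponentIn (frontier Ω) x, α y = α x) ∧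
          ∀ x ∈ closure Ω, ν x = pb ω α x)) := by
  exact main_aux Ω hΩo hΩb hann ω hω hcrit hωlc W hW hW0 ν hν hν0
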